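/- arXiv:2109.14177 — 2 statements merged into one kernel-verified Lean document; each statement's English description precedes it below -/
import Mathlib

section
/- There exist absolute constants c > 0, c' > 0 and C > 0 such that for every finite set A ⊂ ℝ with |A| ≥ 2, there exist a, a' ∈ A with: |2(A+a)² − 2(A+a)² + 2(A+a')² − (A+a')²| · |2(A+a)³ − 2(A+a)³ + 2(A+a')³ − (A+a')³| ≥ c · |A|⁵ / (log |A|)^C. In particular, for every finite A ⊂ ℝ with |A| ≥ 2, max{ |4(A+A)² − 3(A+A)²| , |4(A+A)³ − 3(A+A)³| } ≥ c' · |A|^{5/2} / (log |A|)^C. -/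
/-!
The proof is a squeezing argument applied to squares and cubes simultaneously.

Passing to `-A` if necessary, at least half of `A` is nonnegative; let `x 0 < ⋯ < x (n - 1)` be these
elements, let `a' - a` be the smallest gap between consecutive ones, and for `m = 2, 3` put
`p i = (x i + a) ^ m` and `b i = (x i + a') ^ m - (x i + a) ^ m`. The sets in question contain all
`p i + b j + (b k - b l)`. Since `a' - a` is the smallest gap, `p i + b i = (x i + a') ^ m ≤ p (i + 1)`,
so the intervals `(p i, p i + b i]` are disjoint. For `i ≥ h := n / 2`, the interval `(0, b i]`
contains the disjoint intervals `(b j, b (j + 1)]` with `j < h`, and each of these contains `b j + u`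
for every gap `u` of the sequence `b` which is at most `b (j + 1) - b j`. This gives
`card_le_of_squeeze`: the sumset has at least `(n - h) * ∑ j < h, gapRank j` elements.

For squares, the gaps of `b` are `2 (a' - a) (x (j + 1) - x j)`. For cubes, `b` is a strictly convex
function of `x`, so the gap of the squares and the gap of the cubes at `j` together determine `j`.
The pairs (rank for squares, rank for cubes) are therefore `h` distinct pairs of integers in
`[1, h]`, and by the inequality between arithmetic and geometric means (`cube_le_of_injOn`)
the product of the two sums of ranks is at least `h ^ 3 / H_h ^ 2`, where `H_h` is the harmonic number.
-/

open Finset Pointwise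

/-- For `a : ℝ`, `m : ℕ` and a finite set `A ⊆ ℝ`, the set `(A + a)^m = {(x + a)^m : x ∈ A}`. -/
noncomputable def powShift (a : ℝ) (m : ℕ) (A : Finset ℝ) : Finset ℝ := A.image fun x => (x + a) ^ m

/-- For `m : ℕ` and a finite set `A ⊆ ℝ`, the set `(A + A)^m = {(x + y)^m : x, y ∈ A}`. -/
noncomputable def powSum (m : ℕ) (A : Finset ℝ) : Finset ℝ := Finset.image₂ (fun x y => (x + y) ^ m) A A

/-! ### Ranks of gaps -/

/-- The rank of `g j` among the distinct values of `g` on `{0, …, h - 1}`, counted from `1`. -/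
noncomputable def gapRank (g : ℕ → ℝ) (h j : ℕ) : ℕ :=
  (((Finset.range h).image g).filter (fun u => u ≤ g j)).card

lemma one_le_gapRank (g : ℕ → ℝ) {h j : ℕ} (hj : j < h) : 1 ≤ gapRank g h j := by
  refine Finset.card_pos.mpr ⟨g j, ?_⟩
  exact Finset.mem_filter.mpr
    ⟨Finset.mem_image_of_mem _ (Finset.mem_range.mpr hj), le_rfl⟩

lemma gapRank_le (g : ℕ → ℝ) (h j : ℕ) : gapRank g h j ≤ h :=
  (Finset.card_filter_le _ _).trans (Finset.card_image_le.trans (Finset.card_range h).le)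

lemma gapRank_lt (g : ℕ → ℝ) {h j k : ℕ} (hk : k < h) (hjk : g j < g k) :
    gapRank g h j < gapRank g h k := by
  refine Finset.card_lt_card (Finset.ssubset_iff_of_subset ?_ |>.mpr ⟨g k, ?_, ?_⟩)
  · intro u hu
    rw [Finset.mem_filter] at hu ⊢
    exact ⟨hu.1, hu.2.trans hjk.le⟩
  · exact Finset.mem_filter.mpr
      ⟨Finset.mem_image_of_mem _ (Finset.mem_range.mpr hk), le_rfl⟩
  · intro hu
    exact absurd (Finset.mem_filter.mp hu).2 (not_le.mpr hjk)

lemma eq_of_gapRank_eq (g : ℕ → ℝ) {h j k : ℕ} (hj : j < h) (hk : k < h)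
    (e : gapRank g h j = gapRank g h k) : g j = g k := by
  rcases lt_trichotomy (g j) (g k) with hlt | heq | hgt
  · exact absurd e (gapRank_lt g hk hlt).ne
  · exact heq
  · exact absurd e (gapRank_lt g hj hgt).ne'

/-! ### The two combinatorial inequalities -/

/-- If `h` distinct pairs `(s j, t j)` of integers lie in `[1, h]²`, then the sums of the two
coordinates have product at least `h ^ 3 / H_h ^ 2`. -/
lemma cube_le_of_injOn (h : ℕ) (s t : ℕ → ℕ) (hs : ∀ j < h, 1 ≤ s j ∧ s j ≤ h)
    (ht : ∀ j < h, 1 ≤ t j ∧ t j ≤ h)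
    (inj : ∀ j < h, ∀ k < h, s j = s k → t j = t k → j = k) :
    (h : ℝ) ^ 3 ≤ (∑ j ∈ Finset.range h, (s j : ℝ)) * (∑ j ∈ Finset.range h, (t j : ℝ)) *
      ((harmonic h : ℚ) : ℝ) ^ 2 := by
  rcases Nat.eq_zero_or_pos h with rfl | hpos
  · simp
  set S := ∑ j ∈ Finset.range h, (s j : ℝ) with hS
  set T := ∑ j ∈ Finset.range h, (t j : ℝ) with hT
  set L := ∑ j ∈ Finset.range h, ((s j : ℝ)⁻¹ * (t j : ℝ)⁻¹) with hL
  have hh : (0 : ℝ) < h := by exact_mod_cast hpos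
  have ne : (Finset.range h).Nonempty := ⟨0, Finset.mem_range.mpr hpos⟩
  have hs0 : ∀ j ∈ Finset.range h, (0 : ℝ) < s j := fun j hj => by
    exact_mod_cast (hs j (Finset.mem_range.mp hj)).1
  have ht0 : ∀ j ∈ Finset.range h, (0 : ℝ) < t j := fun j hj => by
    exact_mod_cast (ht j (Finset.mem_range.mp hj)).1
  have hS0 : 0 < S := Finset.sum_pos hs0 ne
  have hT0 : 0 < T := Finset.sum_pos ht0 ne
  -- distinctness of the pairs bounds `L` by the full double sum over `[1, h]²`
  have hLH : L ≤ ((harmonic h : ℚ) : ℝ) ^ 2 := by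
    have hH : ((harmonic h : ℚ) : ℝ) = ∑ i ∈ Finset.Icc 1 h, (i : ℝ)⁻¹ := by
      rw [harmonic_eq_sum_Icc]; push_cast; rfl
    rw [hH, sq, Finset.sum_mul_sum, ← Finset.sum_product', hL]
    have : ∑ j ∈ Finset.range h, ((s j : ℝ)⁻¹ * (t j : ℝ)⁻¹) =
        ∑ q ∈ (Finset.range h).image (fun j => (s j, t j)), ((q.1 : ℝ)⁻¹ * (q.2 : ℝ)⁻¹) := by
      rw [Finset.sum_image]
      intro j hj k hk e
      simp only [Prod.mk.injEq] at e
      exact inj j (by simpa using hj) k (by simpa using hk) e.1 e.2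
    rw [this]
    refine Finset.sum_le_sum_of_subset_of_nonneg ?_ (fun q _ _ => by positivity)
    intro q hq
    obtain ⟨j, hj, rfl⟩ := Finset.mem_image.mp hq
    have hj := Finset.mem_range.mp hj
    simp [hs j hj, ht j hj]
  have amgm : ∀ a b c : ℝ, 0 < a → 0 < b → 0 < c → a * b * c = 1 → 3 ≤ a + b + c := by
    intro a b c ha hb hc e
    by_contra hlt
    push Not at hlt
    nlinarith [sq_nonneg (a - b), sq_nonneg (b - c), sq_nonneg (a - c), mul_pos ha hb,
      mul_pos hb hc, mul_pos ha hc]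
  have key : ∀ j ∈ Finset.range h,
      (3 : ℝ) ≤ h / S * s j + h / T * t j + S * T / h ^ 2 * ((s j : ℝ)⁻¹ * (t j : ℝ)⁻¹) := by
    intro j hj
    have h1 := hs0 j hj
    have h2 := ht0 j hj
    apply amgm <;> first | positivity | field_simp
  have sum := Finset.sum_le_sum key
  simp only [Finset.sum_add_distrib, ← Finset.mul_sum] at sum
  rw [← hS, ← hT, ← hL] at sum
  simp only [Finset.sum_const, Finset.card_range, nsmul_eq_mul] at sum
  rw [div_mul_cancel₀ _ hS0.ne', div_mul_cancel₀ _ hT0.ne'] at sum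
  have h3 : (h : ℝ) ≤ S * T / h ^ 2 * L := by linarith
  have h4 : (h : ℝ) ^ 3 ≤ S * T * L := by
    have := mul_le_mul_of_nonneg_right h3 (sq_nonneg (h : ℝ))
    calc (h : ℝ) ^ 3 = h * h ^ 2 := by ring
      _ ≤ _ := this
      _ = S * T * L := by field_simp
  exact h4.trans (mul_le_mul_of_nonneg_left hLH (by positivity))

/-- Squeezing: the intervals `(p i, p i + b i]` are disjoint, and for `i ≥ h` each of them contains
all the points `p i + b j + u` with `j < h` and `u ≤ b (j + 1) - b j` a gap of `b`. -/
lemma card_le_of_squeeze (n h : ℕ) (hn : h < n) (p b : ℕ → ℝ) (S : Finset ℝ)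
    (hp : ∀ i k, i < k → k < n → p i + b i ≤ p k)
    (hb : ∀ i k, i < k → k < n → b i < b k)
    (hb0 : ∀ i < n, 0 < b i)
    (hS : ∀ i < n, ∀ j < n, ∀ k < n, ∀ l < n, p i + b j + (b k - b l) ∈ S) :
    (n - h) * ∑ j ∈ Finset.range h, gapRank (fun j => b (j + 1) - b j) h j ≤ S.card := by
  set g : ℕ → ℝ := fun j => b (j + 1) - b j with hg
  have hcard : ((Finset.Ico h n) ×ˢ ((Finset.range h).sigma
      (fun j => ((Finset.range h).image g).filter (fun u => u ≤ g j)))).card =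
      (n - h) * ∑ j ∈ Finset.range h, gapRank g h j := by
    rw [Finset.card_product, Nat.card_Ico, Finset.card_sigma]; rfl
  rw [← hcard]
  have hble : ∀ i k, i ≤ k → k < n → b i ≤ b k := fun i k hik hk => by
    rcases hik.eq_or_lt with rfl | hlt
    · exact le_rfl
    · exact (hb i k hlt hk).le
  have gpos : ∀ j < h, 0 < g j := fun j hj => sub_pos.mpr (hb j (j + 1) (by omega) (by omega))
  refine Finset.card_le_card_of_injOn (fun w => p w.1 + b w.2.1 + w.2.2) ?_ ?_
  · rintro ⟨i, j, u⟩ hw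
    simp only [Finset.coe_product, Set.mem_prod, Finset.mem_coe, Finset.mem_Ico, Finset.mem_sigma,
      Finset.mem_range, Finset.mem_filter, Finset.mem_image] at hw
    obtain ⟨hi, hj, ⟨k, hk, rfl⟩, -⟩ := hw
    exact hS i hi.2 j (by omega) (k + 1) (by omega) k (by omega)
  · rintro ⟨i, j, u⟩ hw ⟨i', j', u'⟩ hw' e
    simp only [Finset.coe_product, Set.mem_prod, Finset.mem_coe, Finset.mem_Ico, Finset.mem_sigma,
      Finset.mem_range, Finset.mem_filter, Finset.mem_image] at hw hw' e
    obtain ⟨hi, hj, ⟨k, hk, rfl⟩, hle⟩ := hw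
    obtain ⟨hi', hj', ⟨k', hk', rfl⟩, hle'⟩ := hw'
    have g2 := gpos k' hk'
    have g1 := gpos k hk
    -- `b j + g k` lies in `(b j, b (j + 1)]`, and likewise for the primed indices
    have e1 : b j + g k ≤ b (j + 1) := by simp only [hg] at hle ⊢; linarith
    have e2 : b j' + g k' ≤ b (j' + 1) := by simp only [hg] at hle' ⊢; linarith
    have hii : i = i' := by
      rcases lt_trichotomy i i' with hlt | heq | hgt
      · have := hp i i' hlt hi'.2
        have := hble (j + 1) i (by omega) hi.2
        have := hb0 j' (by omega)
        linarith
      · exact heq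
      · have := hp i' i hgt hi.2
        have := hble (j' + 1) i' (by omega) hi'.2
        have := hb0 j (by omega)
        linarith
    subst hii
    have hjj : j = j' := by
      rcases lt_trichotomy j j' with hlt | heq | hgt
      · have := hble (j + 1) j' (by omega) (by omega)
        linarith
      · exact heq
      · have := hble (j' + 1) j (by omega) (by omega)
        linarith
    subst hjj
    have huu : g k = g k' := by linarith
    rw [huu]

/-! ### Nonnegative sets -/

/-- The set `2(A + a)^m - 2(A + a)^m + 2(A + a')^m - (A + a')^m`. -/
noncomputable def expanderSet (a a' : ℝ) (m : ℕ) (A : Finset ℝ) : Finset ℝ :=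
  powShift a m A + powShift a m A - powShift a m A - powShift a m A +
    powShift a' m A + powShift a' m A - powShift a' m A

lemma mem_powShift {a y : ℝ} {m : ℕ} {A : Finset ℝ} (hy : y ∈ A) : (y + a) ^ m ∈ powShift a m A :=
  Finset.mem_image_of_mem _ hy

lemma mem_expanderSet {a a' : ℝ} {m : ℕ} {A : Finset ℝ} {w x y z : ℝ}
    (hw : w ∈ A) (hx : x ∈ A) (hy : y ∈ A) (hz : z ∈ A) :
    (w + a) ^ m + ((x + a') ^ m - (x + a) ^ m) +
      (((y + a') ^ m - (y + a) ^ m) - ((z + a') ^ m - (z + a) ^ m)) ∈ expanderSet a a' m A := by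
  have : (w + a) ^ m + ((x + a') ^ m - (x + a) ^ m) +
      (((y + a') ^ m - (y + a) ^ m) - ((z + a') ^ m - (z + a) ^ m)) =
      (w + a) ^ m + (z + a) ^ m - (x + a) ^ m - (y + a) ^ m + (x + a') ^ m + (y + a') ^ m
        - (z + a') ^ m := by ring
  rw [this]
  unfold expanderSet
  exact sub_mem_sub (add_mem_add (add_mem_add (sub_mem_sub (sub_mem_sub (add_mem_add
    (mem_powShift hw) (mem_powShift hz)) (mem_powShift hx)) (mem_powShift hy)) (mem_powShift hx))
    (mem_powShift hy)) (mem_powShift hz)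

lemma exists_enum (A : Finset ℝ) : ∃ x : ℕ → ℝ, (∀ i < A.card, x i ∈ A) ∧
    ∀ i j, i < j → j < A.card → x i < x j := by
  refine ⟨fun k => if hk : k < A.card then A.orderEmbOfFin rfl ⟨k, hk⟩ else 0, ?_, ?_⟩
  · intro i hi
    simp only [hi, dif_pos]
    exact A.orderEmbOfFin_mem rfl _
  · intro i j hij hj
    have hi : i < A.card := hij.trans hj
    simp only [hi, hj, dif_pos]
    exact (A.orderEmbOfFin rfl).strictMono (by simpa using hij)

/-- The estimate for a set of nonnegative reals: `a, a'` are consecutive elements at the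
smallest distance. -/
lemma expander_of_nonneg (A : Finset ℝ) (hA : ∀ y ∈ A, 0 ≤ y) (hcard : 2 ≤ A.card) :
    ∃ a ∈ A, ∃ a' ∈ A,
      ((A.card - A.card / 2 : ℕ) : ℝ) ^ 2 * ((A.card / 2 : ℕ) : ℝ) ^ 3 ≤
        ((expanderSet a a' 2 A).card : ℝ) * ((expanderSet a a' 3 A).card : ℝ) *
          ((harmonic (A.card / 2) : ℚ) : ℝ) ^ 2 := by
  obtain ⟨x, xmem, xmono⟩ := exists_enum A
  set n := A.card with hn
  set h := n / 2 with hh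
  have hhn : h < n := by omega
  obtain ⟨q, hq, hmin⟩ := Finset.exists_min_image (Finset.range (n - 1))
    (fun i => x (i + 1) - x i) ⟨0, by simp; omega⟩
  simp only [Finset.mem_range] at hq hmin
  have ha := xmem q (by omega)
  have ha' := xmem (q + 1) (by omega)
  refine ⟨x q, ha, x (q + 1), ha', ?_⟩
  have haa : x q < x (q + 1) := xmono _ _ (by omega) (by omega)
  have ha0 := hA _ ha
  have x0 : ∀ i < n, 0 ≤ x i := fun i hi => hA _ (xmem i hi)
  generalize hae : x q = a at *
  generalize hae' : x (q + 1) = a' at *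
  have xgap : ∀ i k, i < k → k < n → x i + a' ≤ x k + a := by
    intro i k hik hk
    have h1 := hmin i (by omega)
    have h2 : x (i + 1) ≤ x k := by
      rcases (Nat.succ_le_of_lt hik).eq_or_lt with e | hlt
      · rw [← e]
      · exact (xmono _ _ hlt hk).le
    linarith
  have hsq := card_le_of_squeeze n h hhn (fun i => (x i + a) ^ 2)
    (fun i => (x i + a') ^ 2 - (x i + a) ^ 2) (expanderSet a a' 2 A)
    (fun i k hik hk => by
      have h0 := x0 i (by omega)
      have := pow_le_pow_left₀ (by linarith) (xgap i k hik hk) 2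
      linarith)
    (fun i k hik hk => by
      have h0 := xmono i k hik hk
      nlinarith)
    (fun i hi => by
      have h0 := x0 i hi
      have := pow_lt_pow_left₀ (show x i + a < x i + a' by linarith) (by linarith) two_ne_zero
      linarith)
    (fun i hi j hj k hk l hl => mem_expanderSet (xmem i hi) (xmem j hj) (xmem k hk) (xmem l hl))
  have hcu := card_le_of_squeeze n h hhn (fun i => (x i + a) ^ 3)
    (fun i => (x i + a') ^ 3 - (x i + a) ^ 3) (expanderSet a a' 3 A)
    (fun i k hik hk => by
      have h0 := x0 i (by omega)
      have := pow_le_pow_left₀ (by linarith) (xgap i k hik hk) 3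
      linarith)
    (fun i k hik hk => by
      have h0 := x0 i (by omega)
      have h1 := xmono i k hik hk
      have h2 : 0 < 3 * (a' - a) * (x k - x i) * (x k + x i + a + a') := by
        have : 0 < a' - a := by linarith
        have : 0 < x k - x i := by linarith
        have : 0 < x k + x i + a + a' := by linarith
        positivity
      nlinarith)
    (fun i hi => by
      have h0 := x0 i hi
      have := pow_lt_pow_left₀ (show x i + a < x i + a' by linarith) (by linarith) three_ne_zero
      linarith)
    (fun i hi j hj k hk l hl => mem_expanderSet (xmem i hi) (xmem j hj) (xmem k hk) (xmem l hl))
  set g : ℕ → ℝ := fun j => (x (j + 1) + a') ^ 2 - (x (j + 1) + a) ^ 2 -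
    ((x j + a') ^ 2 - (x j + a) ^ 2) with hg
  set v : ℕ → ℝ := fun j => (x (j + 1) + a') ^ 3 - (x (j + 1) + a) ^ 3 -
    ((x j + a') ^ 3 - (x j + a) ^ 3) with hv
  -- strict convexity: among equal gaps of the squares, the gaps of the cubes increase
  have hlt : ∀ j k, j < k → k < h → g j = g k → v j < v k := by
    intro j k hjk hk e
    have hd : 0 < a' - a := by linarith
    have e1 : x (j + 1) - x j = x (k + 1) - x k := by
      have : 2 * (a' - a) * (x (j + 1) - x j) = 2 * (a' - a) * (x (k + 1) - x k) := by
        simp only [hg] at e; linarith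
      exact mul_left_cancel₀ (by positivity) this
    have h1 := xmono j k hjk (by omega)
    have h2 := xmono j (j + 1) (by omega) (by omega)
    have h3 : v k - v j = 6 * (a' - a) * (x (j + 1) - x j) * (x k - x j) := by
      have : x (k + 1) = x k + (x (j + 1) - x j) := by linarith
      simp only [hv, this]; ring
    have : 0 < v k - v j := by
      rw [h3]
      have : 0 < x (j + 1) - x j := by linarith
      have : 0 < x k - x j := by linarith
      positivity
    linarith
  have main := cube_le_of_injOn h (gapRank g h) (gapRank v h)
    (fun j hj => ⟨one_le_gapRank g hj, gapRank_le g h j⟩)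
    (fun j hj => ⟨one_le_gapRank v hj, gapRank_le v h j⟩)
    (fun j hj k hk e1 e2 => by
      have e1 := eq_of_gapRank_eq g hj hk e1
      have e2 := eq_of_gapRank_eq v hj hk e2
      rcases lt_trichotomy j k with h1 | h1 | h1
      · exact absurd e2 (hlt j k h1 hk e1).ne
      · exact h1
      · exact absurd e2 (hlt k j h1 hj e1.symm).ne')
  have hsq' : ((n - h : ℕ) : ℝ) * ∑ j ∈ Finset.range h, (gapRank g h j : ℝ) ≤
      (expanderSet a a' 2 A).card := by exact_mod_cast hsq
  have hcu' : ((n - h : ℕ) : ℝ) * ∑ j ∈ Finset.range h, (gapRank v h j : ℝ) ≤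
      (expanderSet a a' 3 A).card := by exact_mod_cast hcu
  have hS0 : 0 ≤ ∑ j ∈ Finset.range h, (gapRank g h j : ℝ) :=
    Finset.sum_nonneg fun j _ => Nat.cast_nonneg _
  have hT0 : 0 ≤ ∑ j ∈ Finset.range h, (gapRank v h j : ℝ) :=
    Finset.sum_nonneg fun j _ => Nat.cast_nonneg _
  clear_value g v
  generalize ∑ j ∈ Finset.range h, (gapRank g h j : ℝ) = S at *
  generalize ∑ j ∈ Finset.range h, (gapRank v h j : ℝ) = T at *
  have hr : (0 : ℝ) ≤ ((n - h : ℕ) : ℝ) := Nat.cast_nonneg _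
  generalize ((n - h : ℕ) : ℝ) = r at *
  calc r ^ 2 * (h : ℝ) ^ 3 ≤ r ^ 2 * (S * T * ((harmonic h : ℚ) : ℝ) ^ 2) :=
        mul_le_mul_of_nonneg_left main (sq_nonneg r)
    _ = (r * S) * (r * T) * ((harmonic h : ℚ) : ℝ) ^ 2 := by ring
    _ ≤ _ := mul_le_mul_of_nonneg_right
        (mul_le_mul hsq' hcu' (mul_nonneg hr hT0) (Nat.cast_nonneg _)) (sq_nonneg _)

/-! ### Reduction to nonnegative sets -/

lemma powShift_mono (a : ℝ) (m : ℕ) {A B : Finset ℝ} (h : A ⊆ B) :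
    powShift a m A ⊆ powShift a m B := Finset.image_subset_image h

lemma expanderSet_mono (a a' : ℝ) (m : ℕ) {A B : Finset ℝ} (h : A ⊆ B) :
    expanderSet a a' m A ⊆ expanderSet a a' m B := by
  have h1 := powShift_mono a m h
  have h2 := powShift_mono a' m h
  unfold expanderSet
  gcongr

lemma powShift_neg_two (a : ℝ) (A : Finset ℝ) : powShift (-a) 2 (-A) = powShift a 2 A := by
  ext y
  simp only [powShift, Finset.mem_image, Finset.mem_neg]
  constructor
  · rintro ⟨_, ⟨x, hx, rfl⟩, rfl⟩; exact ⟨x, hx, by ring⟩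
  · rintro ⟨x, hx, rfl⟩; exact ⟨-x, ⟨x, hx, rfl⟩, by ring⟩

lemma powShift_neg_three (a : ℝ) (A : Finset ℝ) : powShift (-a) 3 (-A) = -powShift a 3 A := by
  ext y
  simp only [powShift, Finset.mem_image, Finset.mem_neg]
  constructor
  · rintro ⟨_, ⟨x, hx, rfl⟩, rfl⟩; exact ⟨_, ⟨x, hx, rfl⟩, by ring⟩
  · rintro ⟨_, ⟨x, hx, rfl⟩, rfl⟩; exact ⟨-x, ⟨x, hx, rfl⟩, by ring⟩

lemma card_expanderSet_neg_three (a a' : ℝ) (A : Finset ℝ) :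
    (expanderSet (-a) (-a') 3 (-A)).card = (expanderSet a a' 3 A).card := by
  have : expanderSet (-a) (-a') 3 (-A) = -expanderSet a a' 3 A := by
    simp only [expanderSet, powShift_neg_three, sub_eq_add_neg, neg_add]
  rw [this, Finset.card_neg]

lemma expanderSet_neg_two (a a' : ℝ) (A : Finset ℝ) :
    expanderSet (-a) (-a') 2 (-A) = expanderSet a a' 2 A := by
  simp only [expanderSet, powShift_neg_two]

/-- Half of `A` lies on one side of the origin; reflecting if needed, `expander_of_nonneg`
applies to that half. -/
lemma expander_of_half (A : Finset ℝ) (hcard : 4 ≤ A.card) :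
    ∃ n : ℕ, A.card ≤ 2 * n ∧ n ≤ A.card ∧ ∃ a ∈ A, ∃ a' ∈ A,
      ((n - n / 2 : ℕ) : ℝ) ^ 2 * ((n / 2 : ℕ) : ℝ) ^ 3 ≤
        ((expanderSet a a' 2 A).card : ℝ) * ((expanderSet a a' 3 A).card : ℝ) *
          ((harmonic (n / 2) : ℚ) : ℝ) ^ 2 := by
  have hsum := Finset.card_filter_add_card_filter_not (s := A) (fun y => 0 ≤ y)
  have aux : ∀ B D : Finset ℝ, D ⊆ B → (∀ y ∈ D, 0 ≤ y) → 2 ≤ D.card → ∃ a ∈ B, ∃ a' ∈ B,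
      ((D.card - D.card / 2 : ℕ) : ℝ) ^ 2 * ((D.card / 2 : ℕ) : ℝ) ^ 3 ≤
        ((expanderSet a a' 2 B).card : ℝ) * ((expanderSet a a' 3 B).card : ℝ) *
          ((harmonic (D.card / 2) : ℚ) : ℝ) ^ 2 := by
    intro B D hDB hD0 hD2
    obtain ⟨a, ha, a', ha', hle⟩ := expander_of_nonneg D hD0 hD2
    refine ⟨a, hDB ha, a', hDB ha', hle.trans ?_⟩
    have h2 := Finset.card_le_card (expanderSet_mono a a' 2 hDB)
    have h3 := Finset.card_le_card (expanderSet_mono a a' 3 hDB)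
    gcongr
  by_cases hhalf : A.card ≤ 2 * (A.filter (fun y => 0 ≤ y)).card
  · exact ⟨_, hhalf, Finset.card_filter_le _ _, aux A _ (Finset.filter_subset _ _)
      (fun y hy => (Finset.mem_filter.mp hy).2) (by omega)⟩
  · set N := A.filter (fun y => ¬ 0 ≤ y) with hN
    have hsub : -N ⊆ -A := Finset.neg_subset_neg (Finset.filter_subset _ _)
    obtain ⟨a, ha, a', ha', hle⟩ := aux (-A) (-N) hsub
      (fun y hy => by
        have := (Finset.mem_filter.mp (Finset.mem_neg'.mp hy)).2
        linarith)
      (by rw [Finset.card_neg]; omega)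
    refine ⟨N.card, by omega, by omega, -a, Finset.mem_neg'.mp ha, -a', Finset.mem_neg'.mp ha', ?_⟩
    rw [Finset.card_neg] at hle
    rw [← expanderSet_neg_two, ← card_expanderSet_neg_three, neg_neg, neg_neg]
    exact hle

/-! ### The bounds with explicit constants -/

lemma expanderSet_nonempty {a a' : ℝ} {m : ℕ} {A : Finset ℝ} (hA : A.Nonempty) :
    (expanderSet a a' m A).Nonempty := by
  obtain ⟨y, hy⟩ := hA
  exact ⟨_, mem_expanderSet hy hy hy hy⟩

lemma log_card_ge {N : ℕ} (h : 2 ≤ N) : (1 / 2 : ℝ) ≤ Real.log N := by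
  have h1 : Real.log 2 ≤ Real.log N :=
    Real.log_le_log (by norm_num) (by exact_mod_cast h)
  linarith [Real.log_two_gt_d9]

lemma product_bound (A : Finset ℝ) (hA : 2 ≤ A.card) : ∃ a ∈ A, ∃ a' ∈ A,
    1 / 40000 * (A.card : ℝ) ^ 5 / (Real.log A.card) ^ (2 : ℝ) ≤
      ((expanderSet a a' 2 A).card : ℝ) * ((expanderSet a a' 3 A).card : ℝ) := by
  have hlog := log_card_ge hA
  rw [Real.rpow_two]
  rcases lt_or_ge A.card 4 with hlt | hge
  · obtain ⟨a, ha⟩ : A.Nonempty := Finset.card_pos.mp (by omega)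
    refine ⟨a, ha, a, ha, ?_⟩
    have h2 : (1 : ℝ) ≤ (expanderSet a a 2 A).card := by
      exact_mod_cast Finset.card_pos.mpr (expanderSet_nonempty ⟨a, ha⟩)
    have h3 : (1 : ℝ) ≤ (expanderSet a a 3 A).card := by
      exact_mod_cast Finset.card_pos.mpr (expanderSet_nonempty ⟨a, ha⟩)
    have hc : (A.card : ℝ) ≤ 3 := by exact_mod_cast (by omega : A.card ≤ 3)
    have h5 : (A.card : ℝ) ^ 5 ≤ 3 ^ 5 := pow_le_pow_left₀ (by positivity) hc 5
    have hl2 : (1 / 2 : ℝ) ^ 2 ≤ Real.log A.card ^ 2 := pow_le_pow_left₀ (by norm_num) hlog 2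
    refine le_trans ?_ (one_le_mul_of_one_le_of_one_le h2 h3)
    rw [div_le_one (by positivity)]
    linarith
  · obtain ⟨n, hn, hnA, a, ha, a', ha', hle⟩ := expander_of_half A hge
    refine ⟨a, ha, a', ha', ?_⟩
    set P := ((expanderSet a a' 2 A).card : ℝ) * ((expanderSet a a' 3 A).card : ℝ) with hP
    have hP0 : 0 ≤ P := by positivity
    have h1 : (A.card : ℝ) / 4 ≤ ((n - n / 2 : ℕ) : ℝ) := by
      rw [div_le_iff₀ (by norm_num)]
      exact_mod_cast (by omega : A.card ≤ (n - n / 2) * 4)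
    have h2 : (A.card : ℝ) / 6 ≤ ((n / 2 : ℕ) : ℝ) := by
      rw [div_le_iff₀ (by norm_num)]
      exact_mod_cast (by omega : A.card ≤ (n / 2) * 6)
    have hH : ((harmonic (n / 2) : ℚ) : ℝ) ≤ 3 * Real.log A.card := by
      have h3 := harmonic_le_one_add_log (n / 2)
      have h4 : Real.log ((n / 2 : ℕ) : ℝ) ≤ Real.log A.card :=
        Real.log_le_log (by exact_mod_cast (by omega : 0 < n / 2))
          (by exact_mod_cast (by omega : n / 2 ≤ A.card))
      linarith
    have hH0 : (0 : ℝ) ≤ ((harmonic (n / 2) : ℚ) : ℝ) := by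
      exact_mod_cast (harmonic_pos (by omega : n / 2 ≠ 0)).le
    have hl : 0 < Real.log A.card := by linarith
    rw [div_le_iff₀ (by positivity)]
    have h5 : ((A.card : ℝ) / 4) ^ 2 * ((A.card : ℝ) / 6) ^ 3 ≤ P * (3 * Real.log A.card) ^ 2 := by
      calc _ ≤ ((n - n / 2 : ℕ) : ℝ) ^ 2 * ((n / 2 : ℕ) : ℝ) ^ 3 := by gcongr
        _ ≤ _ := hle
        _ ≤ _ := by gcongr
    have h6 : 0 ≤ (A.card : ℝ) ^ 5 := by positivity
    linear_combination (1 / 9) * h5 + (1 / 31104 - 1 / 40000) * h6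

lemma powShift_subset_powSum {a : ℝ} {m : ℕ} {A : Finset ℝ} (ha : a ∈ A) :
    powShift a m A ⊆ powSum m A := by
  intro y hy
  obtain ⟨x, hx, rfl⟩ := Finset.mem_image.mp hy
  exact Finset.mem_image₂.mpr ⟨x, hx, a, ha, rfl⟩

lemma card_expanderSet_le {a a' : ℝ} {m : ℕ} {A : Finset ℝ} (ha : a ∈ A) (ha' : a' ∈ A) :
    (expanderSet a a' m A).card ≤ (powSum m A + powSum m A + powSum m A + powSum m A -
      powSum m A - powSum m A - powSum m A).card := by
  have h1 := powShift_subset_powSum (m := m) ha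
  have h2 := powShift_subset_powSum (m := m) ha'
  have e : powSum m A + powSum m A + powSum m A + powSum m A -
      powSum m A - powSum m A - powSum m A = powSum m A + powSum m A - powSum m A - powSum m A +
      powSum m A + powSum m A - powSum m A := by
    simp only [sub_eq_add_neg]
    generalize -powSum m A = Q
    abel
  rw [e]
  apply Finset.card_le_card
  unfold expanderSet
  gcongr

theorem squares_and_cubes_expander :
    ∃ c c' C : ℝ, 0 < c ∧ 0 < c' ∧ 0 < C ∧
      ∀ A : Finset ℝ, 2 ≤ A.card →
        (∃ a ∈ A, ∃ a' ∈ A,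
          c * (A.card : ℝ) ^ 5 / (Real.log A.card) ^ C ≤
            (((powShift a 2 A + powShift a 2 A - powShift a 2 A - powShift a 2 A +
                powShift a' 2 A + powShift a' 2 A - powShift a' 2 A).card : ℝ) *
              ((powShift a 3 A + powShift a 3 A - powShift a 3 A - powShift a 3 A +
                powShift a' 3 A + powShift a' 3 A - powShift a' 3 A).card : ℝ))) ∧
        c' * (A.card : ℝ) ^ ((5 : ℝ) / 2) / (Real.log A.card) ^ C ≤
          max
            (((powSum 2 A + powSum 2 A + powSum 2 A + powSum 2 A -
                powSum 2 A - powSum 2 A - powSum 2 A).card : ℝ))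
            (((powSum 3 A + powSum 3 A + powSum 3 A + powSum 3 A -
                powSum 3 A - powSum 3 A - powSum 3 A).card : ℝ)) := by
  refine ⟨1 / 40000, 1 / 400, 2, by norm_num, by norm_num, by norm_num, fun A hA => ?_⟩
  obtain ⟨a, ha, a', ha', hle⟩ := product_bound A hA
  refine ⟨⟨a, ha, a', ha', hle⟩, ?_⟩
  have h2 : ((expanderSet a a' 2 A).card : ℝ) ≤ _ :=
    Nat.cast_le.mpr (card_expanderSet_le (m := 2) ha ha')
  have h3 : ((expanderSet a a' 3 A).card : ℝ) ≤ _ :=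
    Nat.cast_le.mpr (card_expanderSet_le (m := 3) ha ha')
  set M := max
    (((powSum 2 A + powSum 2 A + powSum 2 A + powSum 2 A -
      powSum 2 A - powSum 2 A - powSum 2 A).card : ℝ))
    (((powSum 3 A + powSum 3 A + powSum 3 A + powSum 3 A -
      powSum 3 A - powSum 3 A - powSum 3 A).card : ℝ)) with hM
  have h2 := h2.trans (le_max_left _ _ : _ ≤ M)
  have h3 := h3.trans (le_max_right _ _ : _ ≤ M)
  have hM0 : 0 ≤ M := le_trans (Nat.cast_nonneg _) h2
  have hlog := log_card_ge hA
  have hl : 0 < Real.log A.card := by linarith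
  have hMM := hle.trans (mul_le_mul h2 h3 (Nat.cast_nonneg _) hM0)
  rw [Real.rpow_two] at hMM ⊢
  refine le_of_abs_le (abs_le_of_sq_le_sq ?_ hM0)
  have hpow : ((A.card : ℝ) ^ ((5 : ℝ) / 2)) ^ 2 = (A.card : ℝ) ^ 5 := by
    rw [← Real.rpow_natCast, ← Real.rpow_mul (by positivity)]
    norm_num
  -- squaring produces an extra factor `(log |A|)⁻²`, which is at most `4`, since `log |A| ≥ 1 / 2`
  calc (1 / 400 * (A.card : ℝ) ^ ((5 : ℝ) / 2) / Real.log A.card ^ 2) ^ 2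
      = 1 / 40000 * (A.card : ℝ) ^ 5 / Real.log A.card ^ 2 * ((1 / 4) / Real.log A.card ^ 2) := by
        rw [div_pow, mul_pow, hpow]; field_simp; norm_num
    _ ≤ 1 / 40000 * (A.card : ℝ) ^ 5 / Real.log A.card ^ 2 * 1 := by
        refine mul_le_mul_of_nonneg_left ?_ (by positivity)
        rw [div_le_one (by positivity)]
        nlinarith
    _ ≤ M ^ 2 := by rw [mul_one, sq M]; exact hMM
end

section
/- There exist absolute constants c > 0 and C > 0 such that for every finite set A of positive reals with |A| ≥ 2, |(AA+1)(AA+1)(AA+1)| ≥ c · |A|^{2 + 1/32} / (log |A|)^C. -/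
/-!
Write `N = #A`, `D = AA + 1` and `M = #(DDD)`. The proof gives the exponent `41 / 20 > 2 + 1 / 32`.

**A large product set.** A Szemerédi–Trotter bound for lines of positive slope in a Cartesian
grid, proved by cutting the grid into cells (`rich_lines_count`), bounds the number of collinear
triples in the grid over `A ∪ (-1/A)`. Collisions among the products `(a x + 1)(b y + 1)` are such
triples, so for some `a, b ∈ A` the set `X = (a A + 1)(b A + 1) ⊆ DD` has at least about `N ^ 2 /
log N` elements (`exists_large_product`).

**Plünnecke–Ruzsa.** Since `XD ⊆ DDD`, the set `Y = DDDD/D` has at most `(M / #X) ^ 5 * #X` elements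
(`exists_pluennecke_set`).

**Squeezing.** List `A` as `x 0 < x 1 < ⋯ < x (N - 1)` and put `φ i (z) = (z x (i + 1) + 1) / (z x
i + 1)`. With `W i = x (N - 1) * x i + 1 ∈ D`, the points `W i * φ i (x j)` cut out about `N ^ 2`
intervals with disjoint interiors, and all their dilates by `h ∈ X` have endpoints in `Y`. Hence
an average dilated interval contains only about `#Y / N ^ 2` elements of `Y`, which forces the
ratios of the endpoints to take few values. On the other hand the two ratios `φ (x (j + 1)) / φ (x
j)` for `φ = φ i` and `φ = φ (i + 1)` together determine `j` (`mob_ratio_injective`), so there are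
at least about `N ^ (1/2)` ratios. This yields `N ^ 5 * #X ^ 2 ≪ (#Y) ^ 4` (`squeeze`).

Together, `N ^ 5 * #X ^ 18 ≪ M ^ 20`, and the lower bound on `#X` gives
`N ^ 41 ≪ M ^ 20 * (log N) ^ 18`.
-/

open Finset Pointwise

/-- For a finite set `A ⊆ ℝ`, the set `AA + 1 = {x * y + 1 : x, y ∈ A}`. -/
noncomputable def prodShiftOne (A : Finset ℝ) : Finset ℝ := Finset.image₂ (fun x y => x * y + 1) A A


/-! ### Lines rich in points of a grid -/

/-- Cauchy–Schwarz: a map `T → R` has at least `#T ^ 2 / #R` ordered pairs of points with equal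
images. -/
lemma card_sq_le_collisions {α β : Type*} [DecidableEq α] [DecidableEq β] (T : Finset α)
    (R : Finset β) (g : α → β) (hg : ∀ x ∈ T, g x ∈ R) :
    #T ^ 2 ≤ #R * #((T ×ˢ T).filter fun p => g p.1 = g p.2) := by
  have h1 : #T = ∑ b ∈ R, #(T.filter fun x => g x = b) :=
    card_eq_sum_card_fiberwise hg
  have h2 : #((T ×ˢ T).filter fun p => g p.1 = g p.2)
      = ∑ b ∈ R, #(T.filter fun x => g x = b) ^ 2 := by
    rw [card_eq_sum_card_fiberwise (f := fun p : α × α => g p.1) (t := R)]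
    · refine sum_congr rfl fun b _ => ?_
      rw [sq, ← card_product]
      congr 1
      ext ⟨x, y⟩
      simp only [mem_filter, mem_product]
      constructor
      · rintro ⟨⟨⟨hx, hy⟩, h⟩, hb⟩
        exact ⟨⟨hx, hb⟩, hy, h ▸ hb⟩
      · rintro ⟨⟨hx, hb⟩, hy, hb'⟩
        exact ⟨⟨⟨hx, hy⟩, hb.trans hb'.symm⟩, hb⟩
    · rintro ⟨x, y⟩ h
      simp only [coe_filter, mem_product, Set.mem_ofPred_eq] at h
      exact hg x h.1.1
  rw [h2, h1]
  exact sq_sum_le_card_mul_sum_sq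

/-- The abscissae of the points of the grid `S ×ˢ S` on the line `y = l.1 * x + l.2`. -/
noncomputable def linePts (S : Finset ℝ) (l : ℝ × ℝ) : Finset ℝ :=
  S.filter fun x => l.1 * x + l.2 ∈ S

lemma linePts_subset (S : Finset ℝ) (l : ℝ × ℝ) : linePts S l ⊆ S := filter_subset _ _

/-- The number of elements of `S` below `x`, i.e. the position of `x` in the increasing
enumeration of `S` when `x ∈ S`. -/
noncomputable def rankIn (S : Finset ℝ) (x : ℝ) : ℕ := #(S.filter fun y => y < x)

lemma rankIn_mono (S : Finset ℝ) {x y : ℝ} (h : x ≤ y) : rankIn S x ≤ rankIn S y :=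
  card_le_card fun _ hz => by
    simp only [mem_filter] at hz ⊢
    exact ⟨hz.1, hz.2.trans_le h⟩

lemma rankIn_le (S : Finset ℝ) (x : ℝ) : rankIn S x ≤ #S := card_filter_le _ _

lemma rankIn_lt (S : Finset ℝ) {x y : ℝ} (hx : x ∈ S) (h : x < y) : rankIn S x < rankIn S y := by
  refine card_lt_card ⟨fun z hz => ?_, fun hs => ?_⟩
  · simp only [mem_filter] at hz ⊢
    exact ⟨hz.1, hz.2.trans h⟩
  · have := hs (mem_filter.2 ⟨hx, h⟩)
    simp at this

lemma rankIn_injOn (S : Finset ℝ) : Set.InjOn (rankIn S) S := by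
  intro x hx y hy h
  rcases lt_trichotomy x y with h' | h' | h'
  · exact absurd h (rankIn_lt S hx h').ne
  · exact h'
  · exact absurd h.symm (rankIn_lt S hy h').ne

/-- Cutting `S` into consecutive blocks of length `q`, at most `#S * q` ordered pairs lie in a
common block. -/
lemma card_block_pairs (S : Finset ℝ) {q : ℕ} (hq : 0 < q) :
    #((S ×ˢ S).filter fun p => rankIn S p.1 / q = rankIn S p.2 / q) ≤ #S * q := by
  rw [card_eq_sum_card_fiberwise (f := Prod.fst) (t := S)]
  · refine (sum_le_card_nsmul _ _ q fun x _ => ?_).trans (by simp)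
    calc _ ≤ #(Ico (rankIn S x / q * q) (rankIn S x / q * q + q)) := by
          refine card_le_card_of_injOn (fun p => rankIn S p.2) ?_ ?_
          · rintro ⟨x', y⟩ h
            simp only [coe_filter, mem_filter, mem_product, Set.mem_ofPred_eq] at h
            obtain ⟨⟨_, h⟩, rfl⟩ := h
            simp only [coe_Ico, Set.mem_Ico]
            rw [h]
            exact ⟨Nat.div_mul_le_self _ _, by
              have := Nat.lt_div_mul_add (a := rankIn S y) hq; exact this⟩
          · rintro ⟨x₁, y₁⟩ h₁ ⟨x₂, y₂⟩ h₂ h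
            simp only [coe_filter, mem_filter, mem_product, Set.mem_ofPred_eq] at h₁ h₂
            have := rankIn_injOn S h₁.1.1.2 h₂.1.1.2 h
            rw [Prod.mk.injEq]
            exact ⟨h₁.2.trans h₂.2.symm, this⟩
      _ = q := by simp
  · rintro ⟨x, y⟩ h
    simp only [coe_filter, mem_product, Set.mem_ofPred_eq] at h
    exact h.1.1

/-- Cut `S` into consecutive blocks of length `q`. A line of positive slope is monotone, so it
meets at most `2 * (#S / q) + 1` of the cells `block × block`; if it carries at least `t` grid
points, with `t` at least twice that number, then at least `t` ordered pairs of distinct grid points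
on it share a cell. A pair of distinct points determines the line, and there are at most
`(#S * q) ^ 2` pairs of grid points sharing a cell. -/
lemma rich_lines (S : Finset ℝ) (Λ : Finset (ℝ × ℝ)) (hpos : ∀ l ∈ Λ, 0 < l.1) (q t : ℕ)
    (hq : 0 < q) (ht : ∀ l ∈ Λ, t ≤ #(linePts S l)) (hqt : 2 * (2 * (#S / q) + 1) ≤ t) :
    #Λ * t ≤ (#S * q) ^ 2 := by
  set blk : ℝ → ℕ := fun x => rankIn S x / q with hblk
  have blk_mono : Monotone blk := fun x y h => Nat.div_le_div_right (rankIn_mono S h)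
  have blk_le : ∀ x, blk x ≤ #S / q := fun x => Nat.div_le_div_right (rankIn_le S x)
  set BB := (S ×ˢ S).filter fun p => blk p.1 = blk p.2 with hBB
  let P : ℝ × ℝ → Finset (ℝ × ℝ) := fun l =>
    ((linePts S l ×ˢ linePts S l).filter fun p => blk p.1 = blk p.2 ∧
      blk (l.1 * p.1 + l.2) = blk (l.1 * p.2 + l.2)).filter fun p => p.1 ≠ p.2
  have hlow : ∀ l ∈ Λ, t ≤ #(P l) := by
    intro l hl
    refine (ht l hl).trans ?_
    set T := linePts S l with hT
    -- On a line of positive slope the cell is determined by the sum of its two block indices,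
    -- since both are monotone along the line.
    have hG := card_sq_le_collisions T (range (2 * (#S / q) + 1))
      (fun x => blk x + blk (l.1 * x + l.2)) (fun x _ => by
        have := blk_le x
        have := blk_le (l.1 * x + l.2)
        simp only [mem_range]; omega)
    rw [card_range] at hG
    have hsplit : #((T ×ˢ T).filter fun p => blk p.1 + blk (l.1 * p.1 + l.2)
        = blk p.2 + blk (l.1 * p.2 + l.2)) ≤ #(P l) + #T := by
      have : (T ×ˢ T).filter (fun p => blk p.1 + blk (l.1 * p.1 + l.2)
        = blk p.2 + blk (l.1 * p.2 + l.2)) ⊆ P l ∪ T.image (fun x => (x, x)) := by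
        rintro ⟨x, y⟩ h
        simp only [mem_filter, mem_product] at h
        obtain ⟨⟨hx, hy⟩, h⟩ := h
        by_cases hxy : x = y
        · subst hxy
          exact mem_union_right _ (mem_image_of_mem _ hx)
        · refine mem_union_left _ ?_
          simp only [P, mem_filter, mem_product]
          refine ⟨⟨⟨hx, hy⟩, ?_⟩, hxy⟩
          rcases le_total x y with hle | hle
          · have h1 := blk_mono hle
            have h2 := blk_mono (show l.1 * x + l.2 ≤ l.1 * y + l.2 by
              have := mul_le_mul_of_nonneg_left hle (hpos l hl).le; linarith)
            omega
          · have h1 := blk_mono hle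
            have h2 := blk_mono (show l.1 * y + l.2 ≤ l.1 * x + l.2 by
              have := mul_le_mul_of_nonneg_left hle (hpos l hl).le; linarith)
            omega
      exact (card_le_card this).trans ((card_union_le _ _).trans
        (Nat.add_le_add_left card_image_le _))
    have hGT := hqt.trans (ht l hl)
    have h3 := hG.trans (Nat.mul_le_mul_left _ hsplit)
    by_contra hcon
    push Not at hcon
    nlinarith
  calc #Λ * t ≤ ∑ l ∈ Λ, #(P l) := by
        simpa using card_nsmul_le_sum Λ (fun l => #(P l)) t hlow
    _ = #(Λ.sigma P) := (card_sigma _ _).symm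
    _ ≤ #(BB ×ˢ BB) := by
        refine card_le_card_of_injOn
          (fun s => (s.2, (s.1.1 * s.2.1 + s.1.2, s.1.1 * s.2.2 + s.1.2))) ?_ ?_
        · rintro ⟨l, x, y⟩ h
          simp only [P, linePts, coe_sigma, Set.mem_sigma_iff, mem_coe, mem_filter,
            mem_product] at h
          simp only [BB, mem_coe, mem_product, mem_filter]
          tauto
        · rintro ⟨⟨m, k⟩, x, y⟩ h ⟨⟨m', k'⟩, x', y'⟩ h' he
          simp only [P, coe_sigma, Set.mem_sigma_iff, mem_coe, mem_filter,
            mem_product] at h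
          simp only [Prod.mk.injEq] at he
          obtain ⟨⟨rfl, rfl⟩, h1, h2⟩ := he
          have hne : x - y ≠ 0 := sub_ne_zero.2 h.2.2
          have hm : m = m' := mul_right_cancel₀ hne (by linarith)
          subst hm
          have hk : k = k' := by linarith
          subst hk
          rfl
    _ ≤ (#S * q) ^ 2 := by
        rw [card_product, ← sq]
        exact Nat.pow_le_pow_left (card_block_pairs S hq) 2

/-- The Szemerédi–Trotter bound `O(#S ^ 4 / t ^ 3)` for the number of lines of positive slope with
at least `t` points in the grid `S ×ˢ S`. -/
lemma rich_lines_count (S : Finset ℝ) (Λ : Finset (ℝ × ℝ)) (hpos : ∀ l ∈ Λ, 0 < l.1)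
    (h2 : ∀ l ∈ Λ, 2 ≤ #(linePts S l)) (t : ℕ) (ht : 1 ≤ t) (htS : t ≤ #S) :
    #(Λ.filter fun l => t ≤ #(linePts S l)) * t ^ 3 ≤ 81 * #S ^ 4 := by
  set Λ' := Λ.filter fun l => t ≤ #(linePts S l) with hΛ'
  have hpos' : ∀ l ∈ Λ', 0 < l.1 := fun l hl => hpos l (mem_filter.1 hl).1
  set n := #S with hn
  -- For `t < 4` one block holding all of `S` suffices: two points determine a line.
  -- For `t ≥ 4` take blocks of length about `8 n / t`.
  rcases lt_or_ge t 4 with h4 | h4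
  · have := rich_lines S Λ' hpos' (n + 1) 2 (by omega)
      (fun l hl => h2 l (mem_filter.1 hl).1) (by
        rw [Nat.div_eq_of_lt (by omega)])
    have h5 : (n * (n + 1)) ^ 2 ≤ (n * (2 * n)) ^ 2 := by gcongr; omega
    have h6 : t ^ 3 ≤ 3 ^ 3 := by gcongr; omega
    calc _ ≤ #Λ' * 3 ^ 3 := by gcongr
      _ ≤ 81 * n ^ 4 := by nlinarith
  · have := rich_lines S Λ' hpos' (8 * n / t + 1) t (Nat.succ_pos _)
      (fun l hl => (mem_filter.1 hl).2) (by
        have h1 : 8 * n < t * (8 * n / t + 1) := Nat.lt_mul_div_succ _ (by omega)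
        set q := 8 * n / t + 1
        have h2 : 8 * (n / q) < t := by
          by_contra hcon
          push Not at hcon
          have := Nat.div_mul_le_self n q
          nlinarith
        rw [← hn]
        omega)
    have h7 : (8 * n / t + 1) * t ≤ 9 * n := by
      have := Nat.div_mul_le_self (8 * n) t
      nlinarith
    calc #Λ' * t ^ 3 = #Λ' * t * t ^ 2 := by ring
      _ ≤ (n * (8 * n / t + 1)) ^ 2 * t ^ 2 := by gcongr
      _ = (n * ((8 * n / t + 1) * t)) ^ 2 := by ring
      _ ≤ (n * (9 * n)) ^ 2 := by gcongr
      _ = 81 * n ^ 4 := by ring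

lemma cube_le_sum (n : ℕ) : n ^ 3 ≤ ∑ t ∈ Icc 1 n, 3 * t ^ 2 := by
  induction n with
  | zero => simp
  | succ n ih =>
    rw [sum_Icc_succ_top (by omega)]
    have : (n + 1) ^ 3 = n ^ 3 + 3 * n ^ 2 + 3 * n + 1 := by ring
    nlinarith

/-- Summing the rich-lines bound over `t`: the number of collinear triples of grid points on
lines of `Λ` is `O(#S ^ 4 * log #S)`. -/
lemma sum_cubes_le (S : Finset ℝ) (Λ : Finset (ℝ × ℝ)) (hpos : ∀ l ∈ Λ, 0 < l.1)
    (h2 : ∀ l ∈ Λ, 2 ≤ #(linePts S l)) :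
    ((∑ l ∈ Λ, #(linePts S l) ^ 3 : ℕ) : ℝ) ≤ 243 * (#S : ℝ) ^ 4 * (1 + Real.log #S) := by
  have h1 : ∑ l ∈ Λ, #(linePts S l) ^ 3
      ≤ ∑ t ∈ Icc 1 #S, 3 * t ^ 2 * #(Λ.filter fun l => t ≤ #(linePts S l)) := by
    calc _ ≤ ∑ l ∈ Λ, ∑ t ∈ Icc 1 #(linePts S l), 3 * t ^ 2 :=
          sum_le_sum fun l _ => cube_le_sum _
      _ = ∑ l ∈ Λ, ∑ t ∈ Icc 1 #S, if t ≤ #(linePts S l) then 3 * t ^ 2 else 0 := by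
          refine sum_congr rfl fun l _ => ?_
          rw [← sum_filter]
          refine sum_congr ?_ fun _ _ => rfl
          ext t
          have := card_le_card (linePts_subset S l)
          simp only [mem_Icc, mem_filter]
          omega
      _ = _ := by
          rw [sum_comm]
          refine sum_congr rfl fun t _ => ?_
          rw [← sum_filter, sum_const, smul_eq_mul, mul_comm]
  calc ((∑ l ∈ Λ, #(linePts S l) ^ 3 : ℕ) : ℝ)
      ≤ ((∑ t ∈ Icc 1 #S, 3 * t ^ 2 * #(Λ.filter fun l => t ≤ #(linePts S l)) : ℕ) : ℝ) := by
        exact_mod_cast h1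
    _ ≤ ∑ t ∈ Icc 1 #S, 243 * (#S : ℝ) ^ 4 * (t : ℝ)⁻¹ := by
        push_cast
        refine sum_le_sum fun t ht => ?_
        rw [mem_Icc] at ht
        have := rich_lines_count S Λ hpos h2 t ht.1 ht.2
        have h3 : (#(Λ.filter fun l => t ≤ #(linePts S l)) : ℝ) * (t : ℝ) ^ 3
          ≤ 81 * (#S : ℝ) ^ 4 := by exact_mod_cast this
        have ht0 : (0 : ℝ) < t := by exact_mod_cast ht.1
        rw [← div_eq_mul_inv, le_div_iff₀ ht0]
        nlinarith
    _ = 243 * (#S : ℝ) ^ 4 * ((harmonic #S : ℚ) : ℝ) := by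
        rw [← mul_sum, harmonic_eq_sum_Icc]
        push_cast
        rfl
    _ ≤ _ := by
        gcongr
        exact harmonic_le_one_add_log _

/-! ### A large product of two dilated shifts -/

/-- Slope and intercept of the line `{(x', y') : (a x + 1)(b y' + 1) = (a x' + 1)(b y + 1)}`. It
passes through `(x, y)` and through the pole `(-1/a, -1/b)`. -/
noncomputable def lineThrough (a b x y : ℝ) : ℝ × ℝ :=
  ((b * y + 1) * a / ((a * x + 1) * b), ((b * y + 1) / (a * x + 1) - 1) / b)

lemma lineThrough_pole {a b x y : ℝ} (ha : 0 < a) (hb : 0 < b) (hx : 0 < x) :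
    (lineThrough a b x y).1 * (-a⁻¹) + (lineThrough a b x y).2 = -b⁻¹ := by
  have : a * x + 1 ≠ 0 := by positivity
  simp only [lineThrough]
  field_simp
  ring

lemma lineThrough_apply {a b x y x' y' : ℝ} (ha : 0 < a) (hb : 0 < b) (hx : 0 < x)
    (h : (a * x + 1) * (b * y' + 1) = (a * x' + 1) * (b * y + 1)) :
    (lineThrough a b x y).1 * x' + (lineThrough a b x y).2 = y' := by
  have : a * x + 1 ≠ 0 := by positivity
  simp only [lineThrough]
  field_simp
  linarith

/-- The dilated and shifted copy `a A + 1` of `A`; for `a ∈ A` it lies in `AA + 1`. -/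
noncomputable def scaledShift (A : Finset ℝ) (a : ℝ) : Finset ℝ := A.image fun x => a * x + 1

/-- Some product set `(a A + 1)(b A + 1)` with `a, b ∈ A` has size at least a constant times `#A ^
2 / log #A`. A collision `(a x₁ + 1)(b y₁ + 1) = (a x₂ + 1)(b y₂ + 1)` makes `(-1/a, -1/b)`, `(x₁,
y₂)`, `(x₂, y₁)` collinear, and these three points determine the collision, so the total number of
collisions over all `a, b` is bounded by the number of collinear triples in the grid on `A ∪
(-1/A)`. -/
lemma exists_large_product (A : Finset ℝ) (hA : ∀ x ∈ A, 0 < x) (hcard : 2 ≤ #A) :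
    ∃ a ∈ A, ∃ b ∈ A, (#A : ℝ) ^ 2 ≤
      15552 * #(scaledShift A a * scaledShift A b) * Real.log #A := by
  set S := A ∪ A.image (fun x => -x⁻¹) with hS
  set Λ := ((A ×ˢ A) ×ˢ (A ×ˢ A)).image
    (fun p => lineThrough p.1.1 p.1.2 p.2.1 p.2.2) with hΛ
  have memS : ∀ x ∈ A, x ∈ S := fun x hx => mem_union_left _ hx
  have memS' : ∀ x ∈ A, -x⁻¹ ∈ S := fun x hx => mem_union_right _ (mem_image_of_mem _ hx)
  have mem_pole : ∀ a ∈ A, ∀ b ∈ A, ∀ x ∈ A, ∀ y ∈ A,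
      -a⁻¹ ∈ linePts S (lineThrough a b x y) := by
    intro a ha b hb x hx y hy
    rw [linePts, mem_filter, lineThrough_pole (hA a ha) (hA b hb) (hA x hx)]
    exact ⟨memS' a ha, memS' b hb⟩
  have mem_pt : ∀ a ∈ A, ∀ b ∈ A, ∀ x ∈ A, ∀ y ∈ A, ∀ x' ∈ A, ∀ y' ∈ A,
      (a * x + 1) * (b * y' + 1) = (a * x' + 1) * (b * y + 1) →
      x' ∈ linePts S (lineThrough a b x y) := by
    intro a ha b hb x hx y hy x' hx' y' hy' h
    rw [linePts, mem_filter, lineThrough_apply (hA a ha) (hA b hb) (hA x hx) h]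
    exact ⟨memS x' hx', memS y' hy'⟩
  have hpos : ∀ l ∈ Λ, 0 < l.1 := by
    intro l hl
    simp only [hΛ, mem_image, mem_product] at hl
    obtain ⟨⟨⟨a, b⟩, x, y⟩, ⟨⟨ha, hb⟩, hx, hy⟩, rfl⟩ := hl
    have := hA a ha
    have := hA b hb
    have := hA x hx
    have := hA y hy
    simp only [lineThrough]
    positivity
  have h2 : ∀ l ∈ Λ, 2 ≤ #(linePts S l) := by
    intro l hl
    simp only [hΛ, mem_image, mem_product] at hl
    obtain ⟨⟨⟨a, b⟩, x, y⟩, ⟨⟨ha, hb⟩, hx, hy⟩, rfl⟩ := hl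
    dsimp only at ha hb hx hy ⊢
    have h1 := mem_pole a ha b hb x hx y hy
    have h2 := mem_pt a ha b hb x hx y hy x hx y hy rfl
    have hne : -a⁻¹ ≠ x := by
      have := inv_pos.2 (hA a ha)
      have := hA x hx
      linarith
    exact one_lt_card.2 ⟨_, h1, _, h2, hne⟩
  set Cl : ℝ × ℝ → Finset ((ℝ × ℝ) × (ℝ × ℝ)) := fun ab =>
    ((A ×ˢ A) ×ˢ (A ×ˢ A)).filter fun p =>
      (ab.1 * p.1.1 + 1) * (ab.2 * p.1.2 + 1) = (ab.1 * p.2.1 + 1) * (ab.2 * p.2.2 + 1) with hCl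
  have htot : ∑ ab ∈ A ×ˢ A, #(Cl ab) ≤ ∑ l ∈ Λ, #(linePts S l) ^ 3 := by
    calc ∑ ab ∈ A ×ˢ A, #(Cl ab) = #((A ×ˢ A).sigma Cl) := (card_sigma _ _).symm
      _ ≤ #(Λ.sigma fun l => linePts S l ×ˢ linePts S l ×ˢ linePts S l) := by
        refine card_le_card_of_injOn (fun s => ⟨lineThrough s.1.1 s.1.2 s.2.1.1 s.2.2.2,
          (-s.1.1⁻¹, s.2.1.1, s.2.2.1)⟩) ?_ ?_
        · rintro ⟨⟨a, b⟩, ⟨x₁, y₁⟩, x₂, y₂⟩ h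
          simp only [hCl, coe_sigma, Set.mem_sigma_iff, mem_coe, mem_filter, mem_product] at h
          obtain ⟨⟨ha, hb⟩, ⟨⟨hx₁, hy₁⟩, hx₂, hy₂⟩, h⟩ := h
          simp only [coe_sigma, Set.mem_sigma_iff, mem_coe, mem_product]
          refine ⟨?_, mem_pole a ha b hb x₁ hx₁ y₂ hy₂,
            mem_pt a ha b hb x₁ hx₁ y₂ hy₂ x₁ hx₁ y₂ hy₂ rfl,
            mem_pt a ha b hb x₁ hx₁ y₂ hy₂ x₂ hx₂ y₁ hy₁ h⟩
          exact mem_image.2 ⟨((a, b), (x₁, y₂)), by simp [ha, hb, hx₁, hy₂], rfl⟩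
        · rintro ⟨⟨a, b⟩, ⟨x₁, y₁⟩, x₂, y₂⟩ h ⟨⟨a', b'⟩, ⟨x₁', y₁'⟩, x₂', y₂'⟩ h' he
          simp only [hCl, coe_sigma, Set.mem_sigma_iff, mem_coe, mem_filter, mem_product] at h h'
          obtain ⟨⟨ha, hb⟩, ⟨⟨hx₁, hy₁⟩, hx₂, hy₂⟩, h⟩ := h
          obtain ⟨⟨ha', hb'⟩, ⟨⟨hx₁', hy₁'⟩, hx₂', hy₂'⟩, h'⟩ := h'
          simp only [Sigma.mk.injEq, heq_eq_eq, Prod.mk.injEq, neg_inj, inv_inj] at he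
          obtain ⟨hl, rfl, rfl, rfl⟩ := he
          have e1 := lineThrough_pole (y := y₂) (hA a ha) (hA b hb) (hA x₁ hx₁)
          have e2 := lineThrough_apply (hA a ha) (hA b hb) (hA x₁ hx₁)
            (show (a * x₁ + 1) * (b * y₂ + 1) = (a * x₁ + 1) * (b * y₂ + 1) from rfl)
          have e3 := lineThrough_apply (hA a ha) (hA b hb) (hA x₁ hx₁) h
          rw [hl] at e1 e2 e3
          rw [lineThrough_pole (hA a ha) (hA b' hb') (hA x₁ hx₁), neg_inj, inv_inj] at e1
          subst e1
          rw [lineThrough_apply (hA a ha) (hA b' hb') (hA x₁ hx₁) rfl] at e2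
          rw [lineThrough_apply (hA a ha) (hA b' hb') (hA x₁ hx₁) h'] at e3
          subst e2 e3
          rfl
      _ = _ := by
        rw [card_sigma]
        refine sum_congr rfl fun l _ => ?_
        rw [card_product, card_product]
        ring
  have hS2 : #S ≤ 2 * #A := by
    refine (card_union_le _ _).trans ?_
    have := card_image_le (s := A) (f := fun x => -x⁻¹)
    omega
  have hN : (2 : ℝ) ≤ #A := by exact_mod_cast hcard
  have hlog2 : (0.69 : ℝ) ≤ Real.log #A :=
    le_trans (by linarith [Real.log_two_gt_d9]) (Real.log_le_log (by norm_num) hN)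
  have hS0 : 0 < #S := by
    have := card_le_card (show A ⊆ S from memS)
    omega
  have hbound : ((∑ ab ∈ A ×ˢ A, #(Cl ab) : ℕ) : ℝ) ≤ 15552 * (#A : ℝ) ^ 4 * Real.log #A := by
    have h1 : ((∑ ab ∈ A ×ˢ A, #(Cl ab) : ℕ) : ℝ) ≤ ((∑ l ∈ Λ, #(linePts S l) ^ 3 : ℕ) : ℝ) := by
      exact_mod_cast htot
    refine h1.trans ((sum_cubes_le S Λ hpos h2).trans ?_)
    have h3 : (#S : ℝ) ≤ 2 * #A := by exact_mod_cast hS2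
    have h4 : Real.log #S ≤ Real.log 2 + Real.log #A := by
      rw [← Real.log_mul (by norm_num) (by positivity)]
      exact Real.log_le_log (by exact_mod_cast hS0) h3
    have h5 : 1 + Real.log #S ≤ 4 * Real.log #A := by
      linarith [Real.log_two_lt_d9]
    calc 243 * (#S : ℝ) ^ 4 * (1 + Real.log #S)
        ≤ 243 * (2 * #A : ℝ) ^ 4 * (4 * Real.log #A) := by
          gcongr
      _ = _ := by ring
  obtain ⟨⟨a, b⟩, hab, hle⟩ := exists_le_of_sum_le (s := A ×ˢ A)
    (f := fun ab => (#(Cl ab) : ℝ)) (g := fun _ => 15552 * (#A : ℝ) ^ 2 * Real.log #A)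
    (card_pos.1 (by rw [card_product]; positivity)) (by
      rw [sum_const, card_product, nsmul_eq_mul]
      push_cast at hbound ⊢
      linarith)
  rw [mem_product] at hab
  refine ⟨a, hab.1, b, hab.2, ?_⟩
  have hcs := card_sq_le_collisions (A ×ˢ A) (scaledShift A a * scaledShift A b)
    (fun p => (a * p.1 + 1) * (b * p.2 + 1)) (fun p hp => by
      rw [mem_product] at hp
      exact mul_mem_mul (mem_image_of_mem _ hp.1) (mem_image_of_mem _ hp.2))
  rw [card_product] at hcs
  have hcs' : ((#A : ℝ) * #A) ^ 2 ≤
      #(scaledShift A a * scaledShift A b) * (#(Cl (a, b)) : ℝ) := by exact_mod_cast hcs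
  have hpos2 : (0 : ℝ) < (#A : ℝ) ^ 2 := by positivity
  refine le_of_mul_le_mul_right ?_ hpos2
  calc (#A : ℝ) ^ 2 * (#A : ℝ) ^ 2 = ((#A : ℝ) * #A) ^ 2 := by ring
    _ ≤ _ := hcs'
    _ ≤ #(scaledShift A a * scaledShift A b) * (15552 * (#A : ℝ) ^ 2 * Real.log #A) := by
      gcongr
    _ = _ := by ring

/-! ### Counting ratios of disjoint intervals -/

/-- The total number, over `h ∈ X`, of elements of `Y` in the dilated interval `(h u, h v]`. -/
noncomputable def gapCost (X Y : Finset ℝ) (u v : ℝ) : ℕ :=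
  ∑ h ∈ X, #(Y.filter fun y => h * u < y ∧ y ≤ h * v)

lemma sum_gapCost_le {κ : Type*} (I : Finset κ) (X Y : Finset ℝ) (hX : ∀ h ∈ X, 0 < h)
    (lo hi : κ → ℝ)
    (hdisj : ∀ k ∈ I, ∀ k' ∈ I, k ≠ k' → hi k ≤ lo k' ∨ hi k' ≤ lo k) :
    ∑ k ∈ I, gapCost X Y (lo k) (hi k) ≤ #X * #Y := by
  classical
  simp only [gapCost]
  rw [sum_comm]
  refine (sum_le_card_nsmul _ _ #Y fun h hh => ?_).trans (by simp)
  rw [← card_biUnion]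
  · exact card_le_card (biUnion_subset.2 fun k _ => filter_subset _ _)
  · intro k hk k' hk' hne
    rw [Function.onFun, disjoint_left]
    intro y hy hy'
    rw [mem_filter] at hy hy'
    have h0 := hX h hh
    rcases hdisj k hk k' hk' hne with h1 | h1
    · have := mul_le_mul_of_nonneg_left h1 h0.le
      linarith [hy.2.2, hy'.2.1]
    · have := mul_le_mul_of_nonneg_left h1 h0.le
      linarith [hy.2.1, hy'.2.2]

/-- Each `p₁ ∈ Y` has at most `T` successors `p₂ ∈ Y` with at most `T` elements of `Y` in `(p₁,
p₂]`. -/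
lemma card_close_pairs_le (Y : Finset ℝ) {T : ℝ} (hT : 0 ≤ T) :
    (#((Y ×ˢ Y).filter fun p => p.1 < p.2 ∧
      (#(Y.filter fun y => p.1 < y ∧ y ≤ p.2) : ℝ) ≤ T) : ℝ) ≤ #Y * T := by
  rw [card_eq_sum_card_fiberwise (f := Prod.fst) (t := Y)]
  · push_cast
    refine (sum_le_card_nsmul _ _ T fun p _ => ?_).trans (by simp)
    set Fb := ((Y ×ˢ Y).filter fun p => p.1 < p.2 ∧
      (#(Y.filter fun y => p.1 < y ∧ y ≤ p.2) : ℝ) ≤ T).filter fun r => r.1 = p with hF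
    rcases Fb.eq_empty_or_nonempty with h0 | hne
    · rw [h0]; simpa using hT
    obtain ⟨⟨p', m⟩, hm, hmax⟩ := exists_max_image Fb Prod.snd hne
    simp only [hF, mem_filter, mem_product] at hm
    obtain ⟨⟨_, _, hmT⟩, rfl⟩ := hm
    refine le_trans ?_ hmT
    norm_cast
    refine card_le_card_of_injOn Prod.snd ?_ ?_
    · rintro ⟨p, y⟩ hy
      have := hmax _ hy
      simp only [hF, coe_filter, mem_filter, mem_product, Set.mem_ofPred_eq] at hy
      obtain ⟨⟨⟨_, hy⟩, hlt, _⟩, rfl⟩ := hy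
      simp only [coe_filter, Set.mem_ofPred_eq]
      exact ⟨hy, hlt, this⟩
    · rintro ⟨p₁, y₁⟩ h₁ ⟨p₂, y₂⟩ h₂ h
      simp only [hF, coe_filter, mem_filter, mem_product, Set.mem_ofPred_eq] at h₁ h₂
      rw [Prod.mk.injEq]
      exact ⟨h₁.2.trans h₂.2.symm, h⟩
  · rintro ⟨x, y⟩ h
    simp only [coe_filter, mem_product, Set.mem_ofPred_eq] at h
    exact h.1.1

/-- Intervals of small cost have few distinct ratios `hi / lo`. By Markov, for at least half of the
`h ∈ X` the interval `(h * lo k, h * hi k]` contains at most `T = 2 τ / #X` elements of `Y`, so its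
endpoints form one of at most `#Y * T` close pairs of `Y`. Choosing one `k` per ratio, the endpoints
determine the ratio, hence `k`, hence `h`. -/
lemma card_ratios_le {κ : Type*} (I : Finset κ) (X Y : Finset ℝ)
    (hX : ∀ h ∈ X, 0 < h) (hXne : X.Nonempty) (lo hi : κ → ℝ) (hlo : ∀ k ∈ I, 0 < lo k)
    (hlt : ∀ k ∈ I, lo k < hi k) (hmem : ∀ k ∈ I, ∀ h ∈ X, h * lo k ∈ Y ∧ h * hi k ∈ Y)
    {τ : ℝ} (hτ0 : 0 < τ) (hτ : ∀ k ∈ I, (gapCost X Y (lo k) (hi k) : ℝ) ≤ τ) :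
    (#(I.image fun k => hi k / lo k) : ℝ) * (#X : ℝ) ^ 2 ≤ 4 * τ * #Y := by
  classical
  rcases I.eq_empty_or_nonempty with rfl | ⟨k₀, _⟩
  · simp only [image_empty, card_empty, Nat.cast_zero, zero_mul]
    positivity
  have : Nonempty κ := ⟨k₀⟩
  set Q := I.image fun k => hi k / lo k with hQ
  have hXc : (0 : ℝ) < #X := by exact_mod_cast hXne.card_pos
  set T := 2 * τ / #X with hT
  have hT0 : 0 < T := by positivity
  have hex : ∀ q ∈ Q, ∃ k ∈ I, hi k / lo k = q := fun q hq => mem_image.1 hq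
  choose! κ' hκI hκq using hex
  set G : ℝ → Finset ℝ := fun q => X.filter fun h =>
    (#(Y.filter fun y => h * lo (κ' q) < y ∧ y ≤ h * hi (κ' q)) : ℝ) ≤ T with hG
  have hGlow : ∀ q ∈ Q, (#X : ℝ) / 2 ≤ #(G q) := by
    intro q hq
    have hc := hτ _ (hκI q hq)
    set B := X.filter fun h =>
      ¬ (#(Y.filter fun y => h * lo (κ' q) < y ∧ y ≤ h * hi (κ' q)) : ℝ) ≤ T with hB
    have h1 : #(G q) + #B = #X := card_filter_add_card_filter_not _
    have h2 : (#B : ℝ) * T ≤ τ := by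
      refine le_trans ?_ hc
      rw [gapCost]
      push_cast
      calc (#B : ℝ) * T ≤ ∑ h ∈ B,
            (#(Y.filter fun y => h * lo (κ' q) < y ∧ y ≤ h * hi (κ' q)) : ℝ) := by
              simpa using card_nsmul_le_sum B _ T fun h hh =>
                (not_le.1 (mem_filter.1 hh).2).le
        _ ≤ _ := sum_le_sum_of_subset_of_nonneg (filter_subset _ _)
              fun _ _ _ => Nat.cast_nonneg _
    have h3 : (#B : ℝ) ≤ #X / 2 := by
      refine le_of_mul_le_mul_right (h2.trans (le_of_eq ?_)) hT0
      rw [hT]; field_simp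
    have h1' : (#(G q) : ℝ) + #B = #X := by exact_mod_cast h1
    linarith
  have hinj : #(Q.sigma G) ≤ #((Y ×ˢ Y).filter fun p => p.1 < p.2 ∧
      (#(Y.filter fun y => p.1 < y ∧ y ≤ p.2) : ℝ) ≤ T) := by
    refine card_le_card_of_injOn (fun s => (s.2 * lo (κ' s.1), s.2 * hi (κ' s.1))) ?_ ?_
    · rintro ⟨q, h⟩ hs
      simp only [hG, coe_sigma, Set.mem_sigma_iff, mem_coe, mem_filter] at hs
      obtain ⟨hq, hh, hle⟩ := hs
      have hm := hmem _ (hκI q hq) h hh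
      simp only [coe_filter, mem_product, Set.mem_ofPred_eq]
      exact ⟨hm, mul_lt_mul_of_pos_left (hlt _ (hκI q hq)) (hX h hh), hle⟩
    · rintro ⟨q, h⟩ hs ⟨q', h'⟩ hs' he
      simp only [hG, coe_sigma, Set.mem_sigma_iff, mem_coe, mem_filter] at hs hs'
      simp only [Prod.mk.injEq] at he
      have hne : h ≠ 0 := (hX h hs.2.1).ne'
      have hne' : h' ≠ 0 := (hX h' hs'.2.1).ne'
      have hqq : q = q' := by
        rw [← hκq q hs.1, ← hκq q' hs'.1, ← mul_div_mul_left (hi (κ' q)) (lo (κ' q)) hne,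
          he.1, he.2, mul_div_mul_left _ _ hne']
      subst hqq
      have := mul_right_cancel₀ (hlo _ (hκI q hs.1)).ne' he.1
      subst this
      rfl
  have hlow : (#Q : ℝ) * (#X / 2) ≤ #(Q.sigma G) := by
    rw [card_sigma]
    push_cast
    simpa using card_nsmul_le_sum Q (fun q => (#(G q) : ℝ)) (#X / 2) hGlow
  have hfin : (#Q : ℝ) * (#X / 2) ≤ #Y * T :=
    hlow.trans ((Nat.cast_le.2 hinj).trans (card_close_pairs_le Y hT0.le))
  rw [hT] at hfin
  have h5 : (#Y : ℝ) * (2 * τ / #X) * (2 * #X) = 4 * τ * #Y := by field_simp; ring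
  calc (#Q : ℝ) * (#X : ℝ) ^ 2 = #Q * (#X / 2) * (2 * #X) := by ring
    _ ≤ #Y * (2 * τ / #X) * (2 * #X) := by gcongr
    _ = _ := h5

/-! ### Möbius maps and squeezing -/

/-- The Möbius map `z ↦ (z x' + 1) / (z x + 1)`, a quotient of two elements of `AA + 1` when
`x, x', z ∈ A`. -/
noncomputable def mob (x x' z : ℝ) : ℝ := (z * x' + 1) / (z * x + 1)

lemma one_lt_mob {x x' z : ℝ} (hx : 0 < x) (hxx : x < x') (hz : 0 < z) : 1 < mob x x' z := by
  rw [mob, one_lt_div (by positivity)]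
  nlinarith

lemma mob_lt_mob {x x' z z' : ℝ} (hx : 0 < x) (hxx : x < x') (hz : 0 < z) (hzz : z < z') :
    mob x x' z < mob x x' z' := by
  have : 0 < z' := hz.trans hzz
  rw [mob, mob, div_lt_div_iff₀ (by positivity) (by positivity)]
  nlinarith [mul_pos (sub_pos.2 hxx) (sub_pos.2 hzz)]

lemma mob_pos {x x' z : ℝ} (hx : 0 < x) (hxx : x < x') (hz : 0 < z) : 0 < mob x x' z :=
  zero_lt_one.trans (one_lt_mob hx hxx hz)

lemma hasDerivAt_log_mob {x x' t : ℝ} (hx : 0 < x) (hxx : x < x') (ht : 0 < t) :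
    HasDerivAt (fun z => Real.log (mob x x' z)) ((x' - x) / ((t * x + 1) * (t * x' + 1))) t := by
  have hx' : 0 < x' := hx.trans hxx
  have h1 : HasDerivAt (fun z : ℝ => z * x' + 1) x' t := by
    simpa using ((hasDerivAt_id t).mul_const x').add_const 1
  have h2 : HasDerivAt (fun z : ℝ => z * x + 1) x t := by
    simpa using ((hasDerivAt_id t).mul_const x).add_const 1
  have p1 : t * x + 1 ≠ 0 := by positivity
  have p2 : t * x' + 1 ≠ 0 := by positivity
  have h3 := (h1.div h2 p1).log (div_ne_zero p2 p1)
  refine h3.congr_deriv ?_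
  simp only [Pi.div_apply]
  field_simp
  ring

/-- The growth ratios of two Möbius maps `mob x x'`, `mob y y'` with `x < x' ≤ y < y'` over the
interval `[z, z']` differ, in at least one coordinate, from those over an interval `[w, w']` to
its right. Otherwise a fixed linear combination of the logarithms of the two maps would take equal
values at the ends of each interval, so by Rolle the ratio of the two logarithmic derivatives
would repeat a value; but that ratio is strictly monotone. -/
lemma mob_ratio_injective {x x' y y' z z' w w' : ℝ} (hx : 0 < x) (hxx : x < x') (hxy : x' ≤ y)
    (hyy : y < y') (hz : 0 < z) (hzz : z < z') (hzw : z' ≤ w) (hww : w < w')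
    (h1 : mob x x' z' / mob x x' z = mob x x' w' / mob x x' w)
    (h2 : mob y y' z' / mob y y' z = mob y y' w' / mob y y' w) : False := by
  have hx' := hx.trans hxx
  have hy : 0 < y := by linarith
  have hy' := hy.trans hyy
  have hz' := hz.trans hzz
  have hw : 0 < w := by linarith
  have hw' := hw.trans hww
  have l1 := congrArg Real.log h1
  have l2 := congrArg Real.log h2
  rw [Real.log_div (mob_pos hx hxx hz').ne' (mob_pos hx hxx hz).ne',
    Real.log_div (mob_pos hx hxx hw').ne' (mob_pos hx hxx hw).ne'] at l1
  rw [Real.log_div (mob_pos hy hyy hz').ne' (mob_pos hy hyy hz).ne',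
    Real.log_div (mob_pos hy hyy hw').ne' (mob_pos hy hyy hw).ne'] at l2
  have hp := Real.log_lt_log (mob_pos hx hxx hz) (mob_lt_mob hx hxx hz hzz)
  set p := Real.log (mob x x' z') - Real.log (mob x x' z) with hpdef
  set r := Real.log (mob y y' z') - Real.log (mob y y' z) with hrdef
  have hp0 : 0 < p := by linarith
  set F : ℝ → ℝ := fun t => p * Real.log (mob y y' t) - r * Real.log (mob x x' t) with hF
  have hder : ∀ t, 0 < t → HasDerivAt F (p * ((y' - y) / ((t * y + 1) * (t * y' + 1)))
      - r * ((x' - x) / ((t * x + 1) * (t * x' + 1)))) t := fun t ht =>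
    ((hasDerivAt_log_mob hy hyy ht).const_mul p).sub ((hasDerivAt_log_mob hx hxx ht).const_mul r)
  have hrolle : ∀ s s', 0 < s → s < s' → F s = F s' → ∃ t, s < t ∧ t < s' ∧
      p * (y' - y) * ((t * x + 1) * (t * x' + 1))
        = r * (x' - x) * ((t * y + 1) * (t * y' + 1)) := by
    intro s s' hs hss hFs
    obtain ⟨t, ht, hd⟩ := exists_hasDerivAt_eq_zero hss
      (fun u hu => (hder u (hs.trans_le hu.1)).continuousAt.continuousWithinAt) hFs
      (fun u hu => hder u (hs.trans hu.1))
    refine ⟨t, ht.1, ht.2, ?_⟩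
    have ht0 : 0 < t := hs.trans ht.1
    have q1 : 0 < t * x + 1 := by positivity
    have q2 : 0 < t * x' + 1 := by positivity
    have q3 : 0 < t * y + 1 := by positivity
    have q4 : 0 < t * y' + 1 := by positivity
    rw [sub_eq_zero] at hd
    field_simp at hd
    linarith
  obtain ⟨ξ, hξ1, hξ2, hξ⟩ := hrolle z z' hz hzz (by simp only [hF, hpdef, hrdef]; ring)
  obtain ⟨η, hη1, hη2, hη⟩ := hrolle w w' hw hww (by simp only [hF]; rw [l1, l2]; ring)
  have hξ0 : 0 < ξ := hz.trans hξ1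
  have hη0 : 0 < η := hw.trans hη1
  have hξη : ξ < η := by linarith
  have k1 : (η * x + 1) * (ξ * y + 1) < (ξ * x + 1) * (η * y + 1) := by
    nlinarith [mul_pos (sub_pos.2 hξη) (sub_pos.2 (hxx.trans_le hxy))]
  have k2 : (η * x' + 1) * (ξ * y' + 1) < (ξ * x' + 1) * (η * y' + 1) := by
    nlinarith [mul_pos (sub_pos.2 hξη) (sub_pos.2 (hxy.trans_lt hyy))]
  have k3 : (η * x + 1) * (ξ * y + 1) * ((η * x' + 1) * (ξ * y' + 1)) <
      (ξ * x + 1) * (η * y + 1) * ((ξ * x' + 1) * (η * y' + 1)) :=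
    mul_lt_mul'' k1 k2 (by positivity) (by positivity)
  have hc : 0 < p * (y' - y) := mul_pos hp0 (sub_pos.2 hyy)
  have k4 := mul_lt_mul_of_pos_left k3 hc
  have e1 : p * (y' - y) * ((ξ * x + 1) * (η * y + 1) * ((ξ * x' + 1) * (η * y' + 1)))
    = p * (y' - y) * ((ξ * x + 1) * (ξ * x' + 1)) * ((η * y + 1) * (η * y' + 1)) := by ring
  have e2 : p * (y' - y) * ((η * x + 1) * (ξ * y + 1) * ((η * x' + 1) * (ξ * y' + 1)))
    = p * (y' - y) * ((η * x + 1) * (η * x' + 1)) * ((ξ * y + 1) * (ξ * y' + 1)) := by ring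
  rw [e1, e2, hξ, hη] at k4
  exact absurd k4 (by rw [not_lt]; apply le_of_eq; ring)

/-- For `W i = x (m + 1) * x i + 1` and `φ i = mob (x i) (x (i + 1))`, the intervals `[W i * φ i
(x j), W i * φ i (x (j + 1))]`, `0 ≤ i, j ≤ m`, have disjoint interiors, because `W i * φ i (x (m
+ 1)) = W (i + 1)`. All their dilates by `h ∈ X` have endpoints in `Y`, so their average cost is
at most `#X * #Y / (m + 1) ^ 2`. Two consecutive cheap rows `i, i + 1` share at least `(m + 1) /
2` cheap columns `j`; the pair of ratios in rows `i, i + 1` determines `j`, while cheap intervals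
have few distinct ratios. -/
lemma squeeze {m : ℕ} (hm : 1 ≤ m) (x : ℕ → ℝ) (hx0 : ∀ i ≤ m + 1, 0 < x i)
    (hx : ∀ i j, i < j → j ≤ m + 1 → x i < x j) (X Y : Finset ℝ) (hX : ∀ h ∈ X, 0 < h)
    (hXne : X.Nonempty)
    (hXY : ∀ h ∈ X, ∀ i ≤ m, ∀ j ≤ m + 1,
      h * ((x (m + 1) * x i + 1) * mob (x i) (x (i + 1)) (x j)) ∈ Y) :
    ((m : ℝ) + 1) * (#X * (m + 1) * m) ^ 2 ≤ 512 * (#Y : ℝ) ^ 4 := by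
  set lo : ℕ × ℕ → ℝ := fun k => (x (m + 1) * x k.1 + 1) * mob (x k.1) (x (k.1 + 1)) (x k.2)
    with hlo
  set hi : ℕ × ℕ → ℝ := fun k =>
    (x (m + 1) * x k.1 + 1) * mob (x k.1) (x (k.1 + 1)) (x (k.2 + 1)) with hhi
  set I := range (m + 1) ×ˢ range (m + 1) with hI
  have hmI : ∀ k, k ∈ I ↔ k.1 ≤ m ∧ k.2 ≤ m := by
    intro k; simp only [hI, mem_product, mem_range]; omega
  have hle : ∀ i j, i ≤ j → j ≤ m + 1 → x i ≤ x j := fun i j hij hj =>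
    (eq_or_lt_of_le hij).elim (fun h => h ▸ le_rfl) fun h => (hx i j h hj).le
  have hW : ∀ i ≤ m + 1, 0 < x (m + 1) * x i + 1 := fun i hi => by
    have := hx0 i hi
    have := hx0 (m + 1) le_rfl
    positivity
  have hmob1 : ∀ i ≤ m, ∀ j ≤ m + 1, 1 < mob (x i) (x (i + 1)) (x j) := fun i hi j hj =>
    one_lt_mob (hx0 i (by omega)) (hx i (i + 1) (by omega) (by omega)) (hx0 j hj)
  have hmob_lt : ∀ i ≤ m, ∀ j j', j < j' → j' ≤ m + 1 →
      mob (x i) (x (i + 1)) (x j) < mob (x i) (x (i + 1)) (x j') := fun i hi j j' hj hj' =>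
    mob_lt_mob (hx0 i (by omega)) (hx i (i + 1) (by omega) (by omega)) (hx0 j (by omega))
      (hx j j' hj hj')
  have hmob_le : ∀ i ≤ m, ∀ j j', j ≤ j' → j' ≤ m + 1 →
      mob (x i) (x (i + 1)) (x j) ≤ mob (x i) (x (i + 1)) (x j') := fun i hi j j' hj hj' =>
    (eq_or_lt_of_le hj).elim (fun h => h ▸ le_rfl) fun h => (hmob_lt i hi j j' h hj').le
  have hlopos : ∀ k ∈ I, 0 < lo k := fun k hk => by
    rw [hmI] at hk
    exact mul_pos (hW _ (by omega)) (zero_lt_one.trans (hmob1 _ hk.1 _ (by omega)))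
  have hlohi : ∀ k ∈ I, lo k < hi k := fun k hk => by
    rw [hmI] at hk
    exact mul_lt_mul_of_pos_left (hmob_lt _ hk.1 _ _ (by omega) (by omega)) (hW _ (by omega))
  have hmem : ∀ k ∈ I, ∀ h ∈ X, h * lo k ∈ Y ∧ h * hi k ∈ Y := fun k hk h hh => by
    rw [hmI] at hk
    exact ⟨hXY h hh _ hk.1 _ (by omega), hXY h hh _ hk.1 _ (by omega)⟩
  have hrow : ∀ k ∈ I, ∀ k' ∈ I, k.1 < k'.1 → hi k ≤ lo k' := by
    intro k hk k' hk' h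
    rw [hmI] at hk hk'
    calc hi k ≤ (x (m + 1) * x k.1 + 1) * mob (x k.1) (x (k.1 + 1)) (x (m + 1)) :=
          mul_le_mul_of_nonneg_left (hmob_le _ hk.1 _ _ (by omega) le_rfl) (hW _ (by omega)).le
      _ = x (m + 1) * x (k.1 + 1) + 1 := by
          rw [mob, mul_div_cancel₀ _ (hW _ (by omega)).ne']
      _ ≤ x (m + 1) * x k'.1 + 1 := by
          have := mul_le_mul_of_nonneg_left (hle (k.1 + 1) k'.1 (by omega) (by omega))
            (hx0 (m + 1) le_rfl).le
          linarith
      _ ≤ lo k' := le_mul_of_one_le_right (hW _ (by omega)).le (hmob1 _ hk'.1 _ (by omega)).le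
  have hcol : ∀ k ∈ I, ∀ k' ∈ I, k.1 = k'.1 → k.2 < k'.2 → hi k ≤ lo k' := by
    intro k hk k' hk' h h'
    rw [hmI] at hk hk'
    simp only [hhi, hlo]
    rw [← h]
    exact mul_le_mul_of_nonneg_left (hmob_le _ hk.1 _ _ (by omega) (by omega))
      (hW _ (by omega)).le
  have hdisj : ∀ k ∈ I, ∀ k' ∈ I, k ≠ k' → hi k ≤ lo k' ∨ hi k' ≤ lo k := by
    intro k hk k' hk' hne
    rcases lt_trichotomy k.1 k'.1 with h | h | h
    · exact Or.inl (hrow k hk k' hk' h)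
    · rcases lt_trichotomy k.2 k'.2 with h' | h' | h'
      · exact Or.inl (hcol k hk k' hk' h h')
      · exact absurd (Prod.ext h h') hne
      · exact Or.inr (hcol k' hk' k hk h.symm h')
    · exact Or.inr (hrow k' hk' k hk h)
  set c : ℕ → ℕ → ℝ := fun i j => (gapCost X Y (lo (i, j)) (hi (i, j)) : ℝ) with hc
  have hc0 : ∀ i j, 0 ≤ c i j := fun i j => Nat.cast_nonneg _
  have htot : ∑ i ∈ range (m + 1), ∑ j ∈ range (m + 1), c i j ≤ #X * #Y := by
    rw [← sum_product']
    have h' : ((∑ k ∈ I, gapCost X Y (lo k) (hi k) : ℕ) : ℝ) ≤ ((#X * #Y : ℕ) : ℝ) :=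
      Nat.cast_le.2 (sum_gapCost_le I X Y hX lo hi hdisj)
    push_cast at h'
    exact h'
  set C : ℕ → ℝ := fun i => ∑ j ∈ range (m + 1), c i j with hC
  have hC0 : ∀ i, 0 ≤ C i := fun i => sum_nonneg fun j _ => hc0 i j
  have hm0 : (0 : ℝ) < m := by exact_mod_cast hm
  have hsum2 : ∑ i ∈ range m, (C i + C (i + 1)) ≤ 2 * (#X * #Y) := by
    rw [sum_add_distrib]
    have a1 := sum_range_succ C m
    have a2 := sum_range_succ' C m
    have := hC0 m
    have := hC0 0
    linarith
  obtain ⟨i, hi_m, hCi⟩ := exists_le_of_sum_le (s := range m) (f := fun i => C i + C (i + 1))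
    (g := fun _ => 2 * (#X * #Y) / (m : ℝ)) (nonempty_range_iff.2 (by omega)) (by
      rw [sum_const, card_range, nsmul_eq_mul, mul_div_cancel₀ _ hm0.ne']
      exact hsum2)
  rw [mem_range] at hi_m
  have hXc : (0 : ℝ) < #X := by exact_mod_cast hXne.card_pos
  have hYc : (0 : ℝ) < #Y := by
    obtain ⟨h, hh⟩ := hXne
    exact_mod_cast card_pos.2 ⟨_, hXY h hh 0 (by omega) 0 (by omega)⟩
  set τ : ℝ := 4 * (#X * #Y) / (m * (m + 1)) with hτ
  have hτ0 : 0 < τ := by positivity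
  -- `τ` is twice the average of `c i j + c (i + 1) j` over `j`, so at least half of the columns
  -- belong to `J`.
  set J := (range (m + 1)).filter fun j => c i j + c (i + 1) j ≤ τ with hJ
  have hJcard : ((m : ℝ) + 1) / 2 ≤ #J := by
    set B := (range (m + 1)).filter fun j => ¬ c i j + c (i + 1) j ≤ τ with hB
    have h1 : #J + #B = m + 1 := by
      rw [← card_range (m + 1)]; exact card_filter_add_card_filter_not _
    have h2 : (#B : ℝ) * τ ≤ 2 * (#X * #Y) / (m : ℝ) := by
      refine le_trans ?_ hCi
      simp only [hC]
      rw [← sum_add_distrib]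
      calc (#B : ℝ) * τ ≤ ∑ j ∈ B, (c i j + c (i + 1) j) := by
            simpa using card_nsmul_le_sum B _ τ fun h hh => (not_le.1 (mem_filter.1 hh).2).le
        _ ≤ _ := sum_le_sum_of_subset_of_nonneg (filter_subset _ _)
              fun j _ _ => add_nonneg (hc0 _ _) (hc0 _ _)
    have h3 : (#B : ℝ) ≤ (m + 1) / 2 := by
      refine le_of_mul_le_mul_right (h2.trans (le_of_eq ?_)) hτ0
      rw [hτ]; field_simp; ring
    have h1' : (#J : ℝ) + #B = m + 1 := by exact_mod_cast h1
    linarith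
  set K : Finset (ℕ × ℕ) := {i, i + 1} ×ˢ J with hK
  have hKI : K ⊆ I := by
    intro k hk
    simp only [hK, hJ, mem_product, mem_insert, mem_singleton, mem_filter, mem_range] at hk
    rw [hmI]; omega
  set Q := K.image fun k => hi k / lo k with hQ
  have hQcard : (#Q : ℝ) * (#X : ℝ) ^ 2 ≤ 4 * τ * #Y := by
    refine card_ratios_le K X Y hX hXne lo hi (fun k hk => hlopos k (hKI hk))
      (fun k hk => hlohi k (hKI hk)) (fun k hk => hmem k (hKI hk)) hτ0 ?_
    rintro ⟨i', j⟩ hk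
    simp only [hK, hJ, mem_product, mem_insert, mem_singleton, mem_filter] at hk
    have h1 := hc0 i j
    have h2 := hc0 (i + 1) j
    obtain ⟨h | h, _, hj⟩ := hk
    · subst h; change c i' j ≤ τ; linarith
    · subst h; change c (i + 1) j ≤ τ; linarith
  have hratio : ∀ i ≤ m, ∀ j, hi (i, j) / lo (i, j)
      = mob (x i) (x (i + 1)) (x (j + 1)) / mob (x i) (x (i + 1)) (x j) := fun i hi j =>
    mul_div_mul_left _ _ (hW i (by omega)).ne'
  have hsep : ∀ j ≤ m, ∀ j' ≤ m, j < j' →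
      hi (i, j) / lo (i, j) = hi (i, j') / lo (i, j') →
      hi (i + 1, j) / lo (i + 1, j) = hi (i + 1, j') / lo (i + 1, j') → False := by
    intro j hj j' hj' hlt e1 e2
    rw [hratio i (by omega), hratio i (by omega)] at e1
    rw [hratio (i + 1) (by omega), hratio (i + 1) (by omega)] at e2
    exact mob_ratio_injective (hx0 i (by omega)) (hx _ _ (by omega) (by omega)) le_rfl
      (hx _ _ (by omega) (by omega)) (hx0 j (by omega)) (hx j (j + 1) (by omega) (by omega))
      (hle _ _ (by omega) (by omega)) (hx j' (j' + 1) (by omega) (by omega)) e1 e2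
  have hJQ : #J ≤ #(Q ×ˢ Q) := by
    refine card_le_card_of_injOn
      (fun j => (hi (i, j) / lo (i, j), hi (i + 1, j) / lo (i + 1, j))) ?_ ?_
    · intro j hj
      rw [mem_coe] at hj
      rw [mem_coe, mem_product]
      exact ⟨mem_image.2 ⟨(i, j), by simp [hK, hj], rfl⟩,
        mem_image.2 ⟨(i + 1, j), by simp [hK, hj], rfl⟩⟩
    · intro j hj j' hj' he
      simp only [Prod.mk.injEq] at he
      simp only [hJ, coe_filter, mem_range, Set.mem_ofPred_eq] at hj hj'
      rcases lt_trichotomy j j' with h | h | h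
      · exact (hsep j (by omega) j' (by omega) h he.1 he.2).elim
      · exact h
      · exact (hsep j' (by omega) j (by omega) h he.1.symm he.2.symm).elim
  have hJQ' : (#J : ℝ) ≤ (#Q : ℝ) ^ 2 := by
    rw [card_product, ← sq] at hJQ; exact_mod_cast hJQ
  have hQ2 : (#Q : ℝ) * (#X * (m + 1) * m) ≤ 16 * (#Y : ℝ) ^ 2 := by
    rw [hτ] at hQcard
    refine le_of_mul_le_mul_left ?_ hXc
    calc (#X : ℝ) * (#Q * (#X * (m + 1) * m)) = #Q * (#X : ℝ) ^ 2 * (m * (m + 1)) := by ring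
      _ ≤ 4 * (4 * (#X * #Y) / (m * (m + 1))) * #Y * (m * (m + 1)) := by gcongr
      _ = _ := by field_simp; ring
  calc ((m : ℝ) + 1) * (#X * (m + 1) * m) ^ 2
      ≤ 2 * (#Q : ℝ) ^ 2 * (#X * (m + 1) * m) ^ 2 := by gcongr; linarith
    _ = 2 * ((#Q : ℝ) * (#X * (m + 1) * m)) ^ 2 := by ring
    _ ≤ 2 * (16 * (#Y : ℝ) ^ 2) ^ 2 := by gcongr
    _ = _ := by ring

/-! ### Plünnecke–Ruzsa and the conclusion -/

/-- The Plünnecke–Ruzsa inequality for `D ^ 4 / D` in the multiplicative group of positive reals,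
transported from `ℝ` through the logarithm. -/
lemma exists_pluennecke_set (X D : Finset ℝ) (hX : ∀ h ∈ X, 0 < h) (hD : ∀ d ∈ D, 0 < d)
    (hXne : X.Nonempty) :
    ∃ Y : Finset ℝ, (∀ d₁ ∈ D, ∀ d₂ ∈ D, ∀ d₃ ∈ D, ∀ d₄ ∈ D, ∀ d₅ ∈ D,
      d₁ * d₂ * (d₃ * (d₄ / d₅)) ∈ Y) ∧ (#Y : ℝ) * (#X : ℝ) ^ 4 ≤ (#(X * D) : ℝ) ^ 5 := by
  classical
  set X' := X.image Real.log with hX'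
  set D' := D.image Real.log with hD'
  have hcX : #X' = #X := card_image_of_injOn fun u hu v hv h =>
    Real.log_injOn_pos (hX u hu) (hX v hv) h
  have hcXD : #(X' + D') ≤ #(X * D) := by
    refine (card_le_card (t := (X * D).image Real.log) ?_).trans card_image_le
    intro s hs
    obtain ⟨u, hu, v, hv, rfl⟩ := mem_add.1 hs
    obtain ⟨h, hh, rfl⟩ := mem_image.1 hu
    obtain ⟨d, hd, rfl⟩ := mem_image.1 hv
    rw [← Real.log_mul (hX h hh).ne' (hD d hd).ne']
    exact mem_image_of_mem _ (mul_mem_mul hh hd)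
  have hp := pluennecke_ruzsa_inequality_nsmul_sub_nsmul_add (hXne.image Real.log) D' 4 1
  have hX0 : (0 : ℝ) < #X := by exact_mod_cast hXne.card_pos
  have hp' : (#(4 • D' - 1 • D') : ℝ) ≤ (#(X' + D') / #X) ^ 5 * #X := by
    rw [← hX', hcX] at hp
    have h := (NNRat.cast_le (K := ℝ)).2 hp
    push_cast at h
    exact h
  refine ⟨(4 • D' - 1 • D').image Real.exp, ?_, ?_⟩
  · intro d₁ h₁ d₂ h₂ d₃ h₃ d₄ h₄ d₅ h₅
    have p₁ := hD d₁ h₁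
    have p₂ := hD d₂ h₂
    have p₃ := hD d₃ h₃
    have p₄ := hD d₄ h₄
    have p₅ := hD d₅ h₅
    refine mem_image.2 ⟨Real.log d₁ + Real.log d₂ + Real.log d₃ + Real.log d₄ - Real.log d₅,
      ?_, ?_⟩
    · have e : (4 • D' - 1 • D') = D' + D' + D' + D' - D' := by
        rw [one_nsmul, succ_nsmul, succ_nsmul, two_nsmul]
      rw [e]
      exact sub_mem_sub (add_mem_add (add_mem_add (add_mem_add (mem_image_of_mem _ h₁)
        (mem_image_of_mem _ h₂)) (mem_image_of_mem _ h₃)) (mem_image_of_mem _ h₄))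
        (mem_image_of_mem _ h₅)
    · rw [Real.exp_sub, Real.exp_add, Real.exp_add, Real.exp_add, Real.exp_log p₁,
        Real.exp_log p₂, Real.exp_log p₃, Real.exp_log p₄, Real.exp_log p₅]
      ring
  · have h1 : (#((4 • D' - 1 • D').image Real.exp) : ℝ) ≤ (#(X * D) / #X) ^ 5 * #X := by
      refine (Nat.cast_le.2 card_image_le).trans (hp'.trans ?_)
      gcongr
    calc _ ≤ (#(X * D) / #X : ℝ) ^ 5 * #X * (#X : ℝ) ^ 4 := by gcongr
      _ = _ := by field_simp

lemma mem_prodShiftOne {A : Finset ℝ} {x y : ℝ} (hx : x ∈ A) (hy : y ∈ A) :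
    x * y + 1 ∈ prodShiftOne A := mem_image₂_of_mem hx hy

lemma scaledShift_subset {A : Finset ℝ} {a : ℝ} (ha : a ∈ A) :
    scaledShift A a ⊆ prodShiftOne A :=
  image_subset_iff.2 fun _ hx => mem_prodShiftOne ha hx

/-- The theorem in integral powers, with the two bounds `#X ≫ #A ^ 2 / log #A` and
`#A ^ 5 * #X ^ 18 ≪ M ^ 20` combined. -/
lemma pow_card_le (A : Finset ℝ) (hA : ∀ x ∈ A, 0 < x) (hcard : 2 ≤ #A) :
    (#A : ℝ) ^ 41 ≤ (15552 * #(prodShiftOne A * prodShiftOne A * prodShiftOne A)) ^ 20 *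
      Real.log #A ^ 18 := by
  set D := prodShiftOne A with hDdef
  have hD : ∀ d ∈ D, 0 < d := by
    intro d hd
    obtain ⟨x, hx, y, hy, rfl⟩ := mem_image₂.1 hd
    have := mul_pos (hA x hx) (hA y hy)
    linarith
  have hN : (2 : ℝ) ≤ #A := by exact_mod_cast hcard
  have hlog2 : (0.69 : ℝ) ≤ Real.log #A :=
    le_trans (by linarith [Real.log_two_gt_d9]) (Real.log_le_log (by norm_num) hN)
  obtain ⟨a, ha, b, hb, hlarge⟩ := exists_large_product A hA hcard
  set X := scaledShift A a * scaledShift A b with hXdef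
  have hXD : X ⊆ D * D := mul_subset_mul (scaledShift_subset ha) (scaledShift_subset hb)
  have hX : ∀ h ∈ X, 0 < h := by
    intro h hh
    obtain ⟨d, hd, e, he, rfl⟩ := mem_mul.1 (hXD hh)
    exact mul_pos (hD d hd) (hD e he)
  have hXne : X.Nonempty :=
    ⟨_, mul_mem_mul (mem_image_of_mem _ ha) (mem_image_of_mem _ ha)⟩
  have hDne : D.Nonempty := ⟨_, mem_prodShiftOne ha ha⟩
  set M := #(D * D * D) with hM
  have hM1 : (1 : ℝ) ≤ M := by
    exact_mod_cast ((hDne.mul hDne).mul hDne).card_pos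
  -- Squeezing needs two consecutive rows, i.e. at least three elements; two elements are immediate.
  rcases hcard.eq_or_lt with h2 | h3
  · rw [← h2] at hlog2 ⊢
    calc ((2 : ℕ) : ℝ) ^ 41 ≤ (15552 * 1) ^ 20 * 0.69 ^ 18 := by norm_num
      _ ≤ _ := by gcongr
  obtain ⟨m, hm⟩ : ∃ m, #A = m + 2 := ⟨#A - 2, by omega⟩
  have hm1 : 1 ≤ m := by omega
  obtain ⟨Y, hYmem, hYcard⟩ := exists_pluennecke_set X D hX hD hXne
  -- The increasing enumeration of `A`, with junk value `0` beyond index `m + 1`.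
  set x : ℕ → ℝ := fun i => if h : i < m + 2 then A.orderEmbOfFin hm ⟨i, h⟩ else 0 with hx
  have hxA : ∀ i ≤ m + 1, x i ∈ A := by
    intro i hi
    have hi' : i < m + 2 := by omega
    simp only [hx, dif_pos hi']
    exact A.orderEmbOfFin_mem hm _
  have hxlt : ∀ i j, i < j → j ≤ m + 1 → x i < x j := by
    intro i j hij hj
    have hi' : i < m + 2 := by omega
    have hj' : j < m + 2 := by omega
    simp only [hx, dif_pos hi', dif_pos hj']
    exact (A.orderEmbOfFin hm).strictMono hij
  have hsq := squeeze hm1 x (fun i hi => hA _ (hxA i hi)) hxlt X Y hX hXne (by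
    intro h hh i hi j hj
    obtain ⟨d₁, hd₁, d₂, hd₂, rfl⟩ := mem_mul.1 (hXD hh)
    exact hYmem d₁ hd₁ d₂ hd₂ _ (mem_prodShiftOne (hxA _ le_rfl) (hxA i (by omega)))
      _ (mem_prodShiftOne (hxA j hj) (hxA (i + 1) (by omega)))
      _ (mem_prodShiftOne (hxA j hj) (hxA i (by omega))))
  have hXDM : (#(X * D) : ℝ) ≤ M :=
    Nat.cast_le.2 (card_le_card (mul_subset_mul_right hXD))
  have hYM : (#Y : ℝ) * (#X : ℝ) ^ 4 ≤ (M : ℝ) ^ 5 := hYcard.trans (by gcongr)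
  have hmN : (#A : ℝ) = m + 2 := by exact_mod_cast hm
  have hm1' : (1 : ℝ) ≤ m := by exact_mod_cast hm1
  have e1 : (#A : ℝ) / 3 ≤ m := by linarith
  have e2 : 2 * (#A : ℝ) / 3 ≤ m + 1 := by linarith
  have main : (2 * (#A : ℝ) / 3) ^ 3 * (#A / 3) ^ 2 * (#X : ℝ) ^ 18 ≤ 512 * (M : ℝ) ^ 20 :=
    calc (2 * (#A : ℝ) / 3) ^ 3 * (#A / 3) ^ 2 * (#X : ℝ) ^ 18
        ≤ ((m : ℝ) + 1) ^ 3 * m ^ 2 * (#X : ℝ) ^ 18 := by gcongr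
      _ = ((m : ℝ) + 1) * (#X * (m + 1) * m) ^ 2 * (#X : ℝ) ^ 16 := by ring
      _ ≤ 512 * (#Y : ℝ) ^ 4 * (#X : ℝ) ^ 16 := by gcongr
      _ = 512 * (#Y * (#X : ℝ) ^ 4) ^ 4 := by ring
      _ ≤ 512 * ((M : ℝ) ^ 5) ^ 4 := by gcongr
      _ = _ := by ring
  have hL : (0 : ℝ) ≤ Real.log #A := by linarith
  calc (#A : ℝ) ^ 41 = #A ^ 5 * ((#A : ℝ) ^ 2) ^ 18 := by ring
    _ ≤ #A ^ 5 * (15552 * #X * Real.log #A) ^ 18 := by gcongr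
    _ = 243 / 8 * 15552 ^ 18 * Real.log #A ^ 18 *
          ((2 * (#A : ℝ) / 3) ^ 3 * (#A / 3) ^ 2 * (#X : ℝ) ^ 18) := by ring
    _ ≤ 243 / 8 * 15552 ^ 18 * Real.log #A ^ 18 * (512 * (M : ℝ) ^ 20) := by gcongr
    _ = 15552 ^ 19 * ((M : ℝ) ^ 20 * Real.log #A ^ 18) := by ring
    _ ≤ 15552 ^ 20 * ((M : ℝ) ^ 20 * Real.log #A ^ 18) := by gcongr <;> norm_num
    _ = _ := by ring

theorem three_products_and_shifts :
    ∃ c C : ℝ, 0 < c ∧ 0 < C ∧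
      ∀ A : Finset ℝ, (∀ x ∈ A, 0 < x) → 2 ≤ A.card →
        c * (A.card : ℝ) ^ ((2 : ℝ) + 1 / 32) / (Real.log A.card) ^ C ≤
          ((prodShiftOne A * prodShiftOne A * prodShiftOne A).card : ℝ) := by
  refine ⟨1 / 15552, 9 / 10, by norm_num, by norm_num, fun A hA hcard => ?_⟩
  have hN : (2 : ℝ) ≤ #A := by exact_mod_cast hcard
  have hL : 0 < Real.log #A := Real.log_pos (by linarith)
  have key := pow_card_le A hA hcard
  set M := #(prodShiftOne A * prodShiftOne A * prodShiftOne A)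
  have hLC : 0 < Real.log #A ^ (9 / 10 : ℝ) := Real.rpow_pos_of_pos hL _
  have h1 : (#A : ℝ) ^ (41 / 20 : ℝ) ≤ 15552 * M * Real.log #A ^ (9 / 10 : ℝ) := by
    refine le_of_pow_le_pow_left₀ (n := 20) (by norm_num) (by positivity) ?_
    rw [mul_pow, ← Real.rpow_mul_natCast (by positivity), ← Real.rpow_mul_natCast hL.le]
    norm_num
    exact_mod_cast key
  -- `41 / 20 = 2.05` exceeds `2 + 1 / 32`.
  have h2 : (#A : ℝ) ^ ((2 : ℝ) + 1 / 32) ≤ (#A : ℝ) ^ (41 / 20 : ℝ) :=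
    Real.rpow_le_rpow_of_exponent_le (by linarith) (by norm_num)
  rw [div_le_iff₀ hLC]
  linarith
end
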